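/- Let X be a Peano space and T a maximal cyclic subset of X. If C is a connected component of X \ T, then the boundary of C consists of exactly one point, and that point lies in T. -/

import Mathlib

open Metric Set

/-- A Jordan curve: a subset homeomorphic to the circle. -/
def IsJordanCurve {X : Type} [TopologicalSpace X] (J : Set X) : Prop :=
  Nonempty (AddCircle (1 : ℝ) ≃ₜ J)

/-- A set is cyclicly connected if every pair of its points lies on a Jordan curve in it. -/
def CyclicallyConnected {X : Type} [TopologicalSpace X] (C : Set X) : Prop :=
  ∀ x ∈ C, ∀ y ∈ C, ∃ J : Set X, J ⊆ C ∧ IsJordanCurve J ∧ x ∈ J ∧ y ∈ J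

/-- A maximal cyclic subset: non-degenerate, cyclicly connected, and not a proper subset
of any cyclicly connected subset. -/
def MaximalCyclic {X : Type} [TopologicalSpace X] (T : Set X) : Prop :=
  ¬ T.Subsingleton ∧ CyclicallyConnected T ∧
    ∀ C : Set X, CyclicallyConnected C → T ⊆ C → C = T

/-!
A maximal cyclic set `T` contains every arc with ends in `T`, since a crosscut of a Jordan curve
in `T` would enlarge `T`.

`T` is closed: a point of `closure T \ T` is the end `f 0` of an arc `f` whose other points lie
in `T`. In a given neighbourhood of `f 0`, no point `f s` with small `s` separates `f 0` from the
rest of the arc, so bridging the arc over each `f s` gives small Jordan curves in `T`. These link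
up to a chain of cyclicly connected subsets of `T` converging to `f 0`, and two disjoint rays
through this chain form an arc through `f 0` with both ends in `T`.

If a component `C` of the complement of `T` had two boundary points, they would be joined by an
arc in the union of `C` with disjoint neighbourhoods of the two points. This arc lies in `T`, hence
in the two disjoint neighbourhoods, which contradicts its connectedness.
-/

/-! ### Arcs -/

/-- `IsArc a b α`: the set `α` is an arc with end points `a ≠ b`, that is, the trace of an
injective path. -/
def IsArc {X : Type*} [TopologicalSpace X] (a b : X) (α : Set X) : Prop :=
  ∃ γ : Path a b, Function.Injective γ ∧ range γ = α

namespace IsArc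

variable {X : Type*} [TopologicalSpace X] {a b c : X} {α β S : Set X}

lemma of_injective_Icc {u v : ℝ} (huv : u < v) {h : Icc u v → X} (hc : Continuous h)
    (hi : Function.Injective h) :
    IsArc (h ⟨u, left_mem_Icc.2 huv.le⟩) (h ⟨v, right_mem_Icc.2 huv.le⟩) (range h) := by
  let e := (iccHomeoI u v huv).symm
  refine ⟨⟨⟨h ∘ e, hc.comp e.continuous⟩, ?_, ?_⟩, hi.comp e.injective, e.surjective.range_comp h⟩
  all_goals
    refine congrArg h (Subtype.ext ?_)
    simp [e, iccHomeoI_symm_apply_coe]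

lemma of_injOn_Icc {u v : ℝ} (huv : u < v) {f : ℝ → X} (hc : ContinuousOn f (Icc u v))
    (hi : InjOn f (Icc u v)) : IsArc (f u) (f v) (f '' Icc u v) := by
  simpa using of_injective_Icc huv hc.domRestrict hi.injective

lemma exists_param (h : IsArc a b α) :
    ∃ f : ℝ → X, Continuous f ∧ InjOn f (Icc 0 1) ∧ f 0 = a ∧ f 1 = b ∧ f '' Icc 0 1 = α := by
  obtain ⟨γ, hi, rfl⟩ := h
  refine ⟨γ.extend, γ.continuous_extend, fun s hs t ht hst => ?_, γ.extend_zero, γ.extend_one,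
    γ.image_extend_of_subset subset_rfl⟩
  rw [γ.extend_apply hs, γ.extend_apply ht] at hst
  exact congrArg Subtype.val (hi hst)

lemma symm (h : IsArc a b α) : IsArc b a α := by
  obtain ⟨γ, hi, rfl⟩ := h
  exact ⟨γ.symm, hi.comp unitInterval.symm_bijective.injective, γ.symm_range⟩

lemma left_mem (h : IsArc a b α) : a ∈ α := by
  obtain ⟨γ, -, rfl⟩ := h
  exact γ.source_mem_range

lemma right_mem (h : IsArc a b α) : b ∈ α := h.symm.left_mem

lemma ne (h : IsArc a b α) : a ≠ b := by
  obtain ⟨γ, hi, -⟩ := h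
  exact fun hab => zero_ne_one (hi (γ.source.trans (hab.trans γ.target.symm)))

lemma isCompact (h : IsArc a b α) : IsCompact α := by
  obtain ⟨γ, -, rfl⟩ := h
  exact isCompact_range γ.continuous

lemma isPreconnected (h : IsArc a b α) : IsPreconnected α := by
  obtain ⟨γ, -, rfl⟩ := h
  exact isPreconnected_range γ.continuous

lemma joinedIn (h : IsArc a b α) : JoinedIn α a b := by
  obtain ⟨γ, -, rfl⟩ := h
  exact ⟨γ, mem_range_self⟩

lemma joinedIn_sdiff_right (h : IsArc a b α) (hc : c ∈ α) (hcb : c ≠ b) :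
    JoinedIn (α \ {b}) a c := by
  obtain ⟨f, hfc, hi, rfl, rfl, rfl⟩ := h.exists_param
  obtain ⟨t, ht, rfl⟩ := hc
  have ht1 : t < 1 := ht.2.lt_of_ne (by rintro rfl; exact hcb rfl)
  refine JoinedIn.ofLine (f := fun s => f (s * t)) (by fun_prop) (by simp) (by simp) ?_
  rintro _ ⟨s, hs, rfl⟩
  have hst : s * t ∈ Icc (0 : ℝ) 1 := unitInterval.mul_mem hs ht
  refine ⟨mem_image_of_mem f hst, fun h1 => ?_⟩
  have : s * t = 1 := hi hst (right_mem_Icc.2 zero_le_one) h1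
  nlinarith [hs.1, hs.2, ht.1]

lemma split (h : IsArc a b α) (hcα : c ∈ α) (hca : c ≠ a) (hcb : c ≠ b) :
    ∃ α₁ α₂, IsArc a c α₁ ∧ IsArc c b α₂ ∧ α₁ ∪ α₂ = α ∧ α₁ ∩ α₂ = {c} := by
  obtain ⟨f, hc, hi, rfl, rfl, rfl⟩ := h.exists_param
  obtain ⟨s, ⟨h0, h1⟩, rfl⟩ := hcα
  have hs0 : 0 < s := h0.lt_of_ne (by rintro rfl; exact hca rfl)
  have hs1 : s < 1 := h1.lt_of_ne (by rintro rfl; exact hcb rfl)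
  refine ⟨f '' Icc 0 s, f '' Icc s 1,
    of_injOn_Icc hs0 hc.continuousOn (hi.mono (Icc_subset_Icc_right h1)),
    of_injOn_Icc hs1 hc.continuousOn (hi.mono (Icc_subset_Icc_left h0)), ?_, ?_⟩
  · rw [← image_union, Icc_union_Icc_eq_Icc h0 h1]
  · rw [← hi.image_inter (Icc_subset_Icc_right h1) (Icc_subset_Icc_left h0),
      Icc_inter_Icc_eq_singleton h0 h1, image_singleton]

lemma trans (h : IsArc a b α) (h' : IsArc b c β) (hαβ : α ∩ β ⊆ {b}) : IsArc a c (α ∪ β) := by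
  obtain ⟨γ, hγ, rfl⟩ := h
  obtain ⟨η, hη, rfl⟩ := h'
  have hmeet (s t : unitInterval) (hst : γ s = η t) : (s : ℝ) = 1 ∧ (t : ℝ) = 0 := by
    have hb : γ s = b := hαβ ⟨mem_range_self s, hst ▸ mem_range_self t⟩
    exact ⟨congrArg Subtype.val (hγ (hb.trans γ.target.symm)),
      congrArg Subtype.val (hη ((hst.symm.trans hb).trans η.source.symm))⟩
  refine ⟨γ.trans η, fun s t hst => Subtype.ext ?_, γ.trans_range η⟩
  rw [Path.trans_apply, Path.trans_apply] at hst
  split_ifs at hst with hs ht ht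
  · linarith [congrArg Subtype.val (hγ hst)]
  · linarith [(hmeet _ _ hst).2]
  · linarith [(hmeet _ _ hst.symm).2]
  · linarith [congrArg Subtype.val (hη hst)]

lemma exists_first_hit (h : IsArc a b α) (hS : IsClosed S) (hαS : (α ∩ S).Nonempty)
    (ha : a ∉ S) : ∃ c ∈ S, ∃ β ⊆ α, IsArc a c β ∧ β ∩ S = {c} := by
  obtain ⟨f, hc, hi, rfl, rfl, rfl⟩ := h.exists_param
  obtain ⟨_, ⟨s, hs, rfl⟩, hsS⟩ := hαS
  obtain ⟨m, ⟨hm, hmS⟩, hmin⟩ :=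
    (isCompact_Icc.inter_right (hS.preimage hc)).exists_isLeast ⟨s, hs, hsS⟩
  have hm0 : 0 < m := hm.1.lt_of_ne (by rintro rfl; exact ha hmS)
  have hsub : Icc 0 m ⊆ Icc (0 : ℝ) 1 := Icc_subset_Icc_right hm.2
  refine ⟨f m, hmS, f '' Icc 0 m, image_mono hsub,
    of_injOn_Icc hm0 hc.continuousOn (hi.mono hsub), Subset.antisymm ?_ ?_⟩
  · rintro _ ⟨⟨t, ht, rfl⟩, htS⟩
    exact congrArg f (ht.2.antisymm (hmin ⟨hsub ht, htS⟩))
  · rintro _ rfl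
    exact ⟨mem_image_of_mem f (right_mem_Icc.2 hm0.le), hmS⟩

lemma exists_subarc_of_isClosed {P Q : Set X} (h : IsArc a b α) (hP : IsClosed P)
    (hQ : IsClosed Q) (ha : a ∈ P) (hb : b ∈ Q) (hPQ : α ∩ P ∩ Q = ∅) :
    ∃ p ∈ P, ∃ q ∈ Q, ∃ β ⊆ α, IsArc p q β ∧ β ∩ P = {p} ∧ β ∩ Q = {q} := by
  have haQ : a ∉ Q := fun haQ => hPQ.subset ⟨⟨h.left_mem, ha⟩, haQ⟩
  obtain ⟨q, hq, β, hβα, hβ, hβQ⟩ := h.exists_first_hit hQ ⟨b, h.right_mem, hb⟩ haQ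
  have hqP : q ∉ P := fun hqP => hPQ.subset ⟨⟨hβα hβ.right_mem, hqP⟩, hq⟩
  obtain ⟨p, hp, δ, hδβ, hδ, hδP⟩ := hβ.symm.exists_first_hit hP ⟨a, hβ.left_mem, ha⟩ hqP
  refine ⟨p, hp, q, hq, δ, hδβ.trans hβα, hδ.symm, hδP, ?_⟩
  exact (inter_subset_inter_left Q hδβ |>.trans hβQ.subset).antisymm
    (singleton_subset_iff.2 ⟨hδ.left_mem, hq⟩)

/-- Follow the arc from `y` in both directions until it meets the closed set. -/
lemma exists_crosscut {y : X} (h : IsArc a y α) (h' : IsArc y b β) (hαβ : α ∩ β ⊆ {y})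
    (hS : IsClosed S) (hαS : (α ∩ S).Nonempty) (hβS : (β ∩ S).Nonempty) (hy : y ∉ S) :
    ∃ r ∈ S, ∃ s ∈ S, ∃ γ ⊆ α ∪ β, y ∈ γ ∧ IsArc r s γ ∧ γ ∩ S = {r, s} := by
  obtain ⟨r, hr, α', hα', har, hαr⟩ := h.symm.exists_first_hit hS hαS hy
  obtain ⟨s, hs, β', hβ', hbs, hβs⟩ := h'.exists_first_hit hS hβS hy
  refine ⟨r, hr, s, hs, α' ∪ β', union_subset_union hα' hβ', Or.inl har.left_mem,
    har.symm.trans hbs ((inter_subset_inter hα' hβ').trans hαβ), ?_⟩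
  rw [union_inter_distrib_right, hαr, hβs, singleton_union]

lemma exists_dist_eq {X : Type*} [MetricSpace X] {a b : X} {α : Set X} (h : IsArc a b α)
    {x : X} {ρ : ℝ} (ha : dist a x < ρ) (hb : ρ ≤ dist b x) :
    ∃ c, dist c x = ρ ∧ ∃ β ⊆ α, IsArc a c β ∧ β ⊆ closedBall x ρ := by
  have ha' : a ∉ (ball x ρ)ᶜ := not_not_intro ha
  obtain ⟨c, hc, β, hβα, hβ, hβc⟩ :=
    h.exists_first_hit isOpen_ball.isClosed_compl ⟨b, h.right_mem, not_lt.2 hb⟩ ha'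
  have hout (z : X) (hz : z ∈ β) (hzρ : ρ ≤ dist z x) : z = c := hβc.subset ⟨hz, not_lt.2 hzρ⟩
  obtain ⟨w, hw, hwρ⟩ := hβ.isPreconnected.intermediate_value hβ.left_mem hβ.right_mem
    (f := (dist · x)) (by fun_prop) ⟨ha.le, not_lt.1 hc⟩
  have hcρ : dist c x = ρ := hout w hw hwρ.ge ▸ hwρ
  refine ⟨c, hcρ, β, hβα, hβ, fun z hz => ?_⟩
  rcases le_total ρ (dist z x) with h | h
  · rw [hout z hz h]; exact hcρ.le
  · exact h

end IsArc

/-! ### Jordan curves -/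

namespace IsJordanCurve

variable {X : Type} [TopologicalSpace X] {J : Set X} {a b : X}

lemma isCompact (hJ : IsJordanCurve J) : IsCompact J := by
  obtain ⟨e⟩ := hJ
  have : Fact ((0 : ℝ) < 1) := ⟨one_pos⟩
  exact isCompact_iff_compactSpace.2 e.compactSpace

lemma exists_param (hJ : IsJordanCurve J) (ha : a ∈ J) :
    ∃ f : ℝ → X, Continuous f ∧ InjOn f (Ico 0 1) ∧ f 0 = a ∧ f 1 = a ∧ f '' Ico 0 1 = J := by
  obtain ⟨e⟩ := hJ
  have : Fact ((0 : ℝ) < 1) := ⟨one_pos⟩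
  set θ := e.symm ⟨a, ha⟩ with hθ
  have hIco : ((↑) : ℝ → AddCircle (1 : ℝ)) '' Ico 0 1 = univ := by
    simpa using AddCircle.coe_image_Ico_eq (1 : ℝ) 0
  have hcont : Continuous ((↑) : ℝ → AddCircle (1 : ℝ)) := AddCircle.continuous_mk' 1
  refine ⟨fun t => e (t + θ), continuous_subtype_val.comp
    (e.continuous.comp (hcont.add continuous_const)), fun s hs t ht hst => ?_, by simp [hθ], ?_, ?_⟩
  · have hst' : (s : AddCircle (1 : ℝ)) = t := add_right_cancel (e.injective (Subtype.ext hst))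
    exact (AddCircle.coe_eq_coe_iff_of_mem_Ico (a := 0) (by simpa using hs)
      (by simpa using ht)).1 hst'
  · simp [hθ, AddCircle.coe_period]
  · have hrange : range (fun z : AddCircle (1 : ℝ) => (e (z + θ) : X)) = J :=
      ((e.surjective.comp (Equiv.addRight θ).surjective).range_comp Subtype.val).trans
        Subtype.range_coe
    calc (fun t : ℝ => (e (t + θ) : X)) '' Ico 0 1
        = (fun z : AddCircle (1 : ℝ) => (e (z + θ) : X)) '' ((fun t : ℝ => ↑t) '' Ico 0 1) := by
          rw [image_image]
      _ = J := by rw [hIco, image_univ, hrange]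

lemma of_injOn_Ico [T2Space X] {f : ℝ → X} (hc : ContinuousOn f (Icc 0 1)) (h01 : f 0 = f 1)
    (hi : InjOn f (Ico 0 1)) : IsJordanCurve (f '' Icc 0 1) := by
  have : Fact ((0 : ℝ) < 1) := ⟨one_pos⟩
  set F := AddCircle.liftIco (1 : ℝ) 0 f with F_def
  have hF : Continuous F := AddCircle.liftIco_continuous (by simpa using h01) (by simpa using hc)
  have hFi : Function.Injective F :=
    (injOn_iff_injective.1 (by simpa using hi)).comp (AddCircle.equivIco 1 0).injective
  have hrange : range F = f '' Icc 0 1 := by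
    calc range F = f '' Ico 0 1 := by
          rw [F_def, AddCircle.liftIco, (AddCircle.equivIco (1 : ℝ) 0).surjective.range_comp,
            range_domRestrict, zero_add]
      _ = f '' Icc 0 1 := by
          rw [← Ico_union_right zero_le_one, image_union, image_singleton, ← h01, eq_comm,
            union_eq_left, singleton_subset_iff]
          exact mem_image_of_mem f (left_mem_Ico.2 one_pos)
  rw [← hrange]
  exact ⟨(hF.isClosedEmbedding hFi).isEmbedding.toHomeomorph⟩

lemma exists_arcs (hJ : IsJordanCurve J) (ha : a ∈ J) (hb : b ∈ J) (hab : a ≠ b) :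
    ∃ α β, IsArc a b α ∧ IsArc a b β ∧ α ∪ β = J ∧ α ∩ β = {a, b} := by
  obtain ⟨g, hc, hi, h0, h1, rfl⟩ := hJ.exists_param ha
  obtain ⟨s, hs, rfl⟩ := hb
  have hs0 : 0 < s := hs.1.lt_of_ne (by rintro rfl; exact hab h0.symm)
  have hi₁ : InjOn g (Icc 0 s) := hi.mono (Icc_subset_Ico_right hs.2)
  have hne {t : ℝ} (ht : t ∈ Ico s 1) : g t ≠ a := fun h =>
    (hs0.trans_le ht.1).ne (hi (left_mem_Ico.2 one_pos) ⟨hs.1.trans ht.1, ht.2⟩ (h0.trans h.symm))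
  have hi₂ : InjOn g (Icc s 1) := by
    rw [← Ico_union_right hs.2.le, union_singleton,
      injOn_insert right_notMem_Ico]
    refine ⟨hi.mono (Ico_subset_Ico_left hs.1), ?_⟩
    rintro ⟨t, ht, hta⟩
    exact hne ht (hta.trans h1)
  refine ⟨g '' Icc 0 s, g '' Icc s 1, ?_, ?_, ?_, Subset.antisymm ?_ ?_⟩
  · simpa only [h0] using IsArc.of_injOn_Icc hs0 hc.continuousOn hi₁
  · simpa only [h1] using (IsArc.of_injOn_Icc hs.2 hc.continuousOn hi₂).symm
  · rw [← Ico_union_right hs.2.le, image_union, ← union_assoc, ← image_union,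
      Icc_union_Ico_eq_Ico hs.1 hs.2, image_singleton, union_eq_left, singleton_subset_iff, h1,
      ← h0]
    exact mem_image_of_mem g (left_mem_Ico.2 one_pos)
  · rintro _ ⟨⟨t, ht, rfl⟩, ⟨r, hr, hrt⟩⟩
    rcases hr.2.eq_or_lt with rfl | hr1
    · exact Or.inl (hrt.symm.trans h1)
    · have hr' := hi ⟨hs.1.trans hr.1, hr1⟩ ⟨ht.1, ht.2.trans_lt hs.2⟩ hrt
      exact Or.inr (congrArg g (ht.2.antisymm (hr' ▸ hr.1)))
  · rintro _ (rfl | rfl)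
    · exact ⟨⟨0, left_mem_Icc.2 hs.1, h0⟩, ⟨1, right_mem_Icc.2 hs.2.le, h1⟩⟩
    · exact ⟨⟨s, right_mem_Icc.2 hs.1, rfl⟩, ⟨s, left_mem_Icc.2 hs.2.le, rfl⟩⟩

lemma exists_arc_through {y : X} (hJ : IsJordanCurve J) (ha : a ∈ J) (hb : b ∈ J) (hab : a ≠ b)
    (hy : y ∈ J) : ∃ α ⊆ J, IsArc a b α ∧ y ∈ α := by
  obtain ⟨α, β, hα, hβ, rfl, -⟩ := hJ.exists_arcs ha hb hab
  rcases hy with hy | hy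
  · exact ⟨α, subset_union_left, hα, hy⟩
  · exact ⟨β, subset_union_right, hβ, hy⟩

lemma exists_arc_avoiding {y : X} (hJ : IsJordanCurve J) (ha : a ∈ J) (hb : b ∈ J) (hab : a ≠ b)
    (hya : y ≠ a) (hyb : y ≠ b) : ∃ α ⊆ J, IsArc a b α ∧ y ∉ α := by
  obtain ⟨α, β, hα, hβ, rfl, hαβ⟩ := hJ.exists_arcs ha hb hab
  by_cases hy : y ∈ α
  · exact ⟨β, subset_union_right, hβ, fun hyβ => (hαβ.subset ⟨hy, hyβ⟩).elim hya hyb⟩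
  · exact ⟨α, subset_union_left, hα, hy⟩

end IsJordanCurve

lemma IsArc.isJordanCurve_union {X : Type} [TopologicalSpace X] [T2Space X] {a b : X}
    {α β : Set X} (hα : IsArc a b α) (hβ : IsArc a b β) (hαβ : α ∩ β ⊆ {a, b}) :
    IsJordanCurve (α ∪ β) := by
  obtain ⟨γ, hγ, rfl⟩ := hα
  obtain ⟨η, hη, rfl⟩ := hβ
  have hmeet {s t : unitInterval} (hst : γ s = η t) :
      (s : ℝ) = 0 ∧ (t : ℝ) = 0 ∨ (s : ℝ) = 1 ∧ (t : ℝ) = 1 := by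
    rcases hαβ ⟨mem_range_self s, hst ▸ mem_range_self t⟩ with h | h
    · exact Or.inl ⟨congrArg Subtype.val (hγ (h.trans γ.source.symm)),
        congrArg Subtype.val (hη ((hst.symm.trans h).trans η.source.symm))⟩
    · exact Or.inr ⟨congrArg Subtype.val (hγ (h.trans γ.target.symm)),
        congrArg Subtype.val (hη ((hst.symm.trans h).trans η.target.symm))⟩
  have hinj : InjOn (γ.trans η.symm).extend (Ico 0 1) := by
    intro s hs t ht hst
    rw [Path.extend_apply _ (Ico_subset_Icc_self hs), Path.extend_apply _ (Ico_subset_Icc_self ht),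
      Path.trans_apply, Path.trans_apply] at hst
    simp only [Path.symm_apply] at hst
    have hs1 := hs.2
    have ht1 := ht.2
    split_ifs at hst with hs' ht' ht'
    · linarith [congrArg Subtype.val (hγ hst)]
    · rcases hmeet hst with ⟨h, h'⟩ | ⟨h, h'⟩ <;> simp at h h' <;> linarith
    · rcases hmeet hst.symm with ⟨h, h'⟩ | ⟨h, h'⟩ <;> simp at h h' <;> linarith
    · have := congrArg Subtype.val (hη hst)
      simp at this
      linarith
  have := IsJordanCurve.of_injOn_Ico (γ.trans η.symm).continuous_extend.continuousOn
    (by simp) hinj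
  rwa [Path.image_extend_of_subset _ subset_rfl, γ.trans_range, η.symm_range] at this

/-! ### Paths contain arcs -/

lemma sSup_inter_Iic_of_mem {L : Type*} [CompleteLattice L] {K : Set L} {t : L} (ht : t ∈ K) :
    sSup (K ∩ Iic t) = t :=
  (show IsGreatest (K ∩ Iic t) t from ⟨⟨ht, self_mem_Iic⟩, fun _ h => h.2⟩).csSup_eq

/-- `K` is a closed set of parameters along which the path `γ` can still be followed continuously:
`γ` takes the same value at the two ends of every gap of `K`. -/
structure IsShortcut {X : Type*} (γ : unitInterval → X) (K : Set unitInterval) : Prop where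
  isClosed : IsClosed K
  zero_mem : 0 ∈ K
  one_mem : 1 ∈ K
  eq_of_gap : ∀ u ∈ K, ∀ v ∈ K, u < v → Disjoint K (Ioo u v) → γ u = γ v

namespace IsShortcut

variable {X : Type*} {γ : unitInterval → X} {K : Set unitInterval}

lemma exists_bracket (hK : IsShortcut γ K) (m : unitInterval) :
    ∃ v ∈ K, m ≤ v ∧ sSup (K ∩ Iic m) ∈ K ∧ sSup (K ∩ Iic m) ≤ m ∧ γ (sSup (K ∩ Iic m)) = γ v ∧
      ∀ r ∈ K, m ≤ r → v ≤ r := by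
  have hcpt := hK.isClosed.isCompact
  obtain ⟨hu, hum : _ ≤ m⟩ := (hcpt.inter_right isClosed_Iic).sSup_mem ⟨0, hK.zero_mem, m.2.1⟩
  obtain ⟨v, ⟨hv, hmv : m ≤ v⟩, hvmin⟩ :=
    (hcpt.inter_right (isClosed_Ici (a := m))).exists_isLeast ⟨1, hK.one_mem, m.2.2⟩
  refine ⟨v, hv, hmv, hu, hum, ?_, fun r hr hmr => hvmin ⟨hr, hmr⟩⟩
  rcases (hum.trans hmv).eq_or_lt with h | h
  · exact congrArg γ h
  · exact hK.eq_of_gap _ hu v hv h (disjoint_left.2 fun r hr hruv =>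
      (le_total r m).elim (fun h => hruv.1.not_ge (le_sSup ⟨hr, h⟩))
        (fun h => hruv.2.not_ge (hvmin ⟨hr, h⟩)))

lemma univ : IsShortcut γ univ where
  isClosed := isClosed_univ
  zero_mem := trivial
  one_mem := trivial
  eq_of_gap _ _ _ _ huv hgap := absurd (univ_disjoint.1 hgap) (nonempty_Ioo.2 huv).ne_empty

/-- Otherwise the last point of `K ∩ [u, v]` with value in `A` and the next point of `K` would be
the ends of a gap. -/
lemma exists_notMem_union [TopologicalSpace X] (hK : IsShortcut γ K) (hγ : Continuous γ)
    {A B : Set X} (hA : IsOpen A) (hB : IsOpen B) (hAB : Disjoint A B) {u v : unitInterval}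
    (hu : u ∈ K) (hv : v ∈ K) (huv : u ≤ v) (huA : γ u ∈ A) (hvB : γ v ∈ B) :
    ∃ r ∈ K ∩ Icc u v, γ r ∉ A ∪ B := by
  by_contra! hcover
  have hcpt : IsCompact (K ∩ Icc u v) := hK.isClosed.isCompact.inter_right isClosed_Icc
  obtain ⟨s, ⟨⟨hsK, hus, hsv⟩, hsB⟩, hsmax⟩ :=
    (hcpt.inter_right (hB.preimage hγ).isClosed_compl).exists_isGreatest
      ⟨u, ⟨hu, left_mem_Icc.2 huv⟩, disjoint_left.1 hAB huA⟩
  have hsA : γ s ∈ A := (hcover s ⟨hsK, hus, hsv⟩).resolve_right hsB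
  obtain ⟨t, ⟨⟨htK, hst, htv⟩, htA⟩, htmin⟩ :=
    ((hK.isClosed.isCompact.inter_right (isClosed_Icc (a := s) (b := v))).inter_right
      (hA.preimage hγ).isClosed_compl).exists_isLeast
      ⟨v, ⟨hv, right_mem_Icc.2 hsv⟩, disjoint_right.1 hAB hvB⟩
  have hst' : s < t := hst.lt_of_ne (by rintro rfl; exact htA hsA)
  suffices hgap : Disjoint K (Ioo s t) from
    htA (mem_preimage.2 (hK.eq_of_gap s hsK t htK hst' hgap ▸ hsA))
  refine disjoint_left.2 fun r hr hrst => ?_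
  have hrv : r ≤ v := hrst.2.le.trans htv
  have hrA : γ r ∈ A := by_contra fun h => hrst.2.not_ge (htmin ⟨⟨hr, hrst.1.le, hrv⟩, h⟩)
  exact hrst.1.not_ge (hsmax ⟨⟨hr, hus.trans hrst.1.le, hrv⟩, disjoint_left.1 hAB hrA⟩)

lemma sInter [TopologicalSpace X] [T2Space X] (hγ : Continuous γ) {c : Set (Set unitInterval)}
    (hc : ∀ K ∈ c, IsShortcut γ K) (hchain : IsChain (· ⊆ ·) c) (hne : c.Nonempty) :
    IsShortcut γ (⋂₀ c) where
  isClosed := isClosed_sInter fun K hK => (hc K hK).isClosed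
  zero_mem K hK := (hc K hK).zero_mem
  one_mem K hK := (hc K hK).one_mem
  eq_of_gap u hu v hv huv hgap := by
    by_contra hne_uv
    obtain ⟨A, B, hA, hB, huA, hvB, hAB⟩ := t2_separation hne_uv
    have : Nonempty c := hne.to_subtype
    have hP : IsClosed (γ ⁻¹' (A ∪ B)ᶜ ∩ Icc u v) :=
      (((hA.union hB).preimage hγ).isClosed_compl).inter isClosed_Icc
    obtain ⟨r, hr⟩ := IsCompact.nonempty_iInter_of_directed_nonempty_isCompact_isClosed
      (fun K : c => (K : Set unitInterval) ∩ (γ ⁻¹' (A ∪ B)ᶜ ∩ Icc u v))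
      (fun K L => (hchain.total K.2 L.2).elim
        (fun h => ⟨K, subset_rfl, inter_subset_inter_left _ h⟩)
        (fun h => ⟨L, inter_subset_inter_left _ h, subset_rfl⟩))
      (fun K => by
        obtain ⟨r, hr, hrAB⟩ := (hc K K.2).exists_notMem_union hγ hA hB hAB (hu K K.2) (hv K K.2)
          huv.le huA hvB
        exact ⟨r, hr.1, hrAB, hr.2⟩)
      (fun K => ((hc K K.2).isClosed.inter hP).isCompact)
      (fun K => (hc K K.2).isClosed.inter hP)
    rw [mem_iInter] at hr
    obtain ⟨-, hrAB, hruv⟩ := hr (Classical.arbitrary c)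
    have hur : u ≠ r := by rintro rfl; exact hrAB (Or.inl huA)
    have hrv : r ≠ v := by rintro rfl; exact hrAB (Or.inr hvB)
    exact disjoint_left.1 hgap (fun K hK => (hr ⟨K, hK⟩).1)
      ⟨hruv.1.lt_of_ne hur, hruv.2.lt_of_ne hrv⟩

lemma exists_minimal [TopologicalSpace X] [T2Space X] (hγ : Continuous γ) :
    ∃ K, Minimal (IsShortcut γ) K := by
  obtain ⟨K, -, hK⟩ := zorn_superset_nonempty {K | IsShortcut γ K}
    (fun c hc hchain hne =>
      ⟨⋂₀ c, IsShortcut.sInter hγ hc hchain hne, fun K hK => sInter_subset_of_mem hK⟩)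
    _ IsShortcut.univ
  exact ⟨K, hK⟩

lemma sdiff_Ioo (hK : IsShortcut γ K) {s t : unitInterval} (hs : s ∈ K) (ht : t ∈ K)
    (hst : γ s = γ t) : IsShortcut γ (K \ Ioo s t) where
  isClosed := hK.isClosed.sdiff isOpen_Ioo
  zero_mem := ⟨hK.zero_mem, fun h => h.1.not_ge s.2.1⟩
  one_mem := ⟨hK.one_mem, fun h => h.2.not_ge t.2.2⟩
  eq_of_gap u hu v hv huv hgap := by
    by_cases hK_gap : Disjoint K (Ioo u v)
    · exact hK.eq_of_gap u hu.1 v hv.1 huv hK_gap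
    obtain ⟨r, hrK, hr⟩ := not_disjoint_iff.1 hK_gap
    have hrst : r ∈ Ioo s t := by_contra fun h => disjoint_left.1 hgap ⟨hrK, h⟩ hr
    have hs_gap := disjoint_left.1 hgap ⟨hs, left_notMem_Ioo⟩
    have ht_gap := disjoint_left.1 hgap ⟨ht, right_notMem_Ioo⟩
    have hus : u = s := le_antisymm
      (not_lt.1 fun h => hu.2 ⟨h, hr.1.trans hrst.2⟩)
      (not_lt.1 fun h => hs_gap ⟨h, hrst.1.trans hr.2⟩)
    have hvt : v = t := le_antisymm
      (not_lt.1 fun h => ht_gap ⟨hr.1.trans hrst.2, h⟩)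
      (not_lt.1 fun h => hv.2 ⟨hrst.1.trans hr.2, h⟩)
    rw [hus, hvt, hst]

lemma disjoint_Ioo_of_minimal (hK : Minimal (IsShortcut γ) K) {s t : unitInterval} (hs : s ∈ K)
    (ht : t ∈ K) (hst : γ s = γ t) : Disjoint K (Ioo s t) :=
  (subset_sdiff.1 (hK.le_of_le (hK.prop.sdiff_Ioo hs ht hst) sdiff_subset)).2

open Filter Topology in
lemma continuous_comp_sSup [TopologicalSpace X] (hK : IsShortcut γ K) (hγ : Continuous γ) :
    Continuous fun t => γ (sSup (K ∩ Iic t)) := by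
  refine continuous_iff_continuousAt.2 fun t => ?_
  by_cases ht : t ∈ K
  · refine tendsto_def.2 fun N hN => ?_
    simp only [sSup_inter_Iic_of_mem ht] at hN
    have hnear : ∀ᶠ s in 𝓝 t, uIcc s t ⊆ γ ⁻¹' N :=
      (tendsto_id.uIcc tendsto_const_nhds).eventually
        (eventually_smallSets_subset.2 (hγ.continuousAt hN))
    filter_upwards [hnear] with s hs
    obtain ⟨v, -, hsv, -, hus, huv, hmin⟩ := hK.exists_bracket s
    rcases le_total t s with hts | hst
    · exact hs (mem_uIcc.2 (Or.inr ⟨le_sSup ⟨ht, hts⟩, hus⟩))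
    · exact mem_preimage.2 (huv ▸ hs (mem_uIcc.2 (Or.inl ⟨hsv, hmin t ht hst⟩)))
  · obtain ⟨v, hv, htv, hu, hut, -, hmin⟩ := hK.exists_bracket t
    have hut' := hut.lt_of_ne (fun h => ht (h ▸ hu))
    have htv' := htv.lt_of_ne (fun h => ht (h ▸ hv))
    refine (continuousAt_const (y := γ (sSup (K ∩ Iic t)))).congr ?_
    filter_upwards [Ioo_mem_nhds hut' htv'] with s hs
    have hIic : K ∩ Iic t = K ∩ Iic s := ext fun r => and_congr_right fun hr =>
      ⟨fun hrt => le_trans (le_sSup (mem_inter hr hrt)) hs.1.le,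
        fun hrs => not_lt.1 fun htr => (lt_of_le_of_lt hrs hs.2).not_ge (hmin r hr htr.le)⟩
    simp only [hIic]

end IsShortcut

lemma exists_path_ordConnected_preimage {X : Type*} [TopologicalSpace X] [T2Space X] {a b : X}
    (γ : Path a b) :
    ∃ g : Path a b, range g ⊆ range γ ∧ ∀ x, (g ⁻¹' {x}).OrdConnected := by
  obtain ⟨K, hK⟩ := IsShortcut.exists_minimal γ.continuous
  have hmono : Monotone fun t => sSup (K ∩ Iic t) := fun s t hst =>
    sSup_le_sSup (inter_subset_inter_right K (Iic_subset_Iic.2 hst))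
  have hmem (t : unitInterval) : sSup (K ∩ Iic t) ∈ K := by
    obtain ⟨-, -, -, h, -⟩ := hK.prop.exists_bracket t
    exact h
  refine ⟨⟨⟨fun t => γ (sSup (K ∩ Iic t)), hK.prop.continuous_comp_sSup γ.continuous⟩, ?_, ?_⟩,
    range_comp_subset_range _ γ, fun x => ordConnected_def.2 ?_⟩
  · simp only [sSup_inter_Iic_of_mem hK.prop.zero_mem, γ.source]
  · simp only [sSup_inter_Iic_of_mem hK.prop.one_mem, γ.target]
  · rintro s hs t ht r ⟨hsr, hrt⟩
    rcases (hmono hsr).eq_or_lt with h | h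
    · exact (congrArg γ h).symm.trans hs
    rcases (hmono hrt).eq_or_lt with h' | h'
    · exact (congrArg γ h').trans ht
    exact (disjoint_left.1 (IsShortcut.disjoint_Ioo_of_minimal hK (hmem s) (hmem t)
      (Eq.trans hs (Eq.symm ht))) (hmem r) ⟨h, h'⟩).elim

/-- For a path `g`, the integral over `q ∈ [0, 1]` of the distance from `g q` to the initial
segment `g '' [0, t]`. It decreases in `t` and is constant exactly where the initial segment does
not grow, so it parametrises the trace of `g` once the fibres of `g` are intervals. -/
noncomputable def distToInitialSegment {X : Type*} [MetricSpace X] {a b : X} (g : Path a b)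
    (t : unitInterval) : ℝ :=
  ∫ q in (0 : ℝ)..1, infDist (g.extend q) (g '' Iic t)

section DistToInitialSegment

variable {X : Type*} [MetricSpace X] {a b : X} (g : Path a b)

lemma continuous_infDist_extend_image_Iic :
    Continuous fun p : unitInterval × ℝ => infDist (g.extend p.2) (g '' Iic p.1) := by
  have hIic (t : unitInterval) : g '' Iic t = (fun r => g (r ⊓ t)) '' univ := by
    refine Subset.antisymm ?_ (image_subset_iff.2 fun r _ => ⟨r ⊓ t, mem_Iic.2 inf_le_right, rfl⟩)
    rintro _ ⟨r, hr, rfl⟩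
    exact ⟨r, mem_univ r, congrArg g (inf_eq_left.2 hr)⟩
  have h : Continuous fun p : unitInterval × ℝ =>
      sInf ((fun r : unitInterval => dist (g.extend p.2) (g (r ⊓ p.1))) '' univ) := by
    refine isCompact_univ.continuous_sInf ?_
    change Continuous fun z : (unitInterval × ℝ) × unitInterval =>
      dist (g.extend z.1.2) (g (z.2 ⊓ z.1.1))
    fun_prop
  refine h.congr fun p => ?_
  rw [infDist_eq_iInf, ← sInf_image', hIic, image_image]

lemma continuous_distToInitialSegment : Continuous (distToInitialSegment g) :=
  intervalIntegral.continuous_parametric_intervalIntegral_of_continuous'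
    (continuous_infDist_extend_image_Iic g) 0 1

variable {g}

lemma distToInitialSegment_lt (hg : ∀ x, (g ⁻¹' {x}).OrdConnected) {s t : unitInterval}
    (hst : s ≤ t) (hne : g s ≠ g t) : distToInitialSegment g t < distToInitialSegment g s := by
  have hcont (r : unitInterval) : Continuous fun q => infDist (g.extend q) (g '' Iic r) :=
    (continuous_infDist_pt _).comp g.continuous_extend
  refine intervalIntegral.integral_lt_integral_of_continuousOn_of_le_of_exists_lt one_pos
    (hcont t).continuousOn (hcont s).continuousOn
    (fun q _ => infDist_le_infDist_of_subset (image_mono (Iic_subset_Iic.2 hst))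
      ⟨g s, mem_image_of_mem g self_mem_Iic⟩) ⟨t, t.2, ?_⟩
  have hclosed : IsClosed (g '' Iic s) := (isClosed_Iic.isCompact.image g.continuous).isClosed
  have hmem : g t ∉ g '' Iic s := by
    rintro ⟨r, hrs, hrt⟩
    exact hne ((hg (g t)).out hrt rfl ⟨hrs, hst⟩)
  rw [g.extend_apply t.2, infDist_zero_of_mem (mem_image_of_mem g self_mem_Iic)]
  exact (hclosed.notMem_iff_infDist_pos ⟨g s, mem_image_of_mem g self_mem_Iic⟩).1 hmem

lemma distToInitialSegment_eq_iff (hg : ∀ x, (g ⁻¹' {x}).OrdConnected) {s t : unitInterval} :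
    distToInitialSegment g s = distToInitialSegment g t ↔ g s = g t := by
  wlog hst : s ≤ t generalizing s t
  · rw [eq_comm, this (le_of_not_ge hst), eq_comm]
  refine ⟨fun h => by_contra fun hne => (distToInitialSegment_lt hg hst hne).ne' h, fun h => ?_⟩
  have himage : g '' Iic t = g '' Iic s := by
    rw [← Iic_union_Icc_eq_Iic hst, image_union, union_eq_left]
    rintro _ ⟨r, hr, rfl⟩
    exact ⟨s, self_mem_Iic, ((hg (g t)).out h rfl hr).symm ▸ h⟩
  rw [distToInitialSegment, distToInitialSegment, himage]

end DistToInitialSegment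

lemma isArc_range_of_ordConnected {X : Type*} [MetricSpace X] {a b : X} (hab : a ≠ b)
    {g : Path a b} (hg : ∀ x, (g ⁻¹' {x}).OrdConnected) : IsArc a b (range g) := by
  set φ := distToInitialSegment g
  have hφ : Continuous φ := continuous_distToInitialSegment g
  have hanti : Antitone φ := fun s t hst => by
    rcases eq_or_ne (g s) (g t) with h | h
    · exact ((distToInitialSegment_eq_iff hg).2 h).ge
    · exact (distToInitialSegment_lt hg hst h).le
  have hlt : φ 1 < φ 0 := distToInitialSegment_lt hg zero_le_one (by simpa using hab)
  have hIcc (t : unitInterval) : φ t ∈ Icc (φ 1) (φ 0) := ⟨hanti t.2.2, hanti t.2.1⟩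
  let ψ : C(unitInterval, Icc (φ 1) (φ 0)) := ⟨fun t => ⟨φ t, hIcc t⟩, by fun_prop⟩
  have hsurj : Function.Surjective ψ := by
    rintro ⟨y, hy⟩
    obtain ⟨t, -, rfl⟩ := isPreconnected_univ.intermediate_value (mem_univ 1) (mem_univ 0)
      hφ.continuousOn hy
    exact ⟨t, rfl⟩
  have hquot : Topology.IsQuotientMap ψ := ψ.continuous.isClosedMap.isQuotientMap ψ.continuous hsurj
  have hψ {s t : unitInterval} : ψ s = ψ t ↔ g s = g t :=
    Subtype.ext_iff.trans (distToInitialSegment_eq_iff hg)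
  let h : C(Icc (φ 1) (φ 0), X) := hquot.lift g fun s t => hψ.1
  have hcomp (t : unitInterval) : h (ψ t) = g t :=
    DFunLike.congr_fun (hquot.lift_comp (g : C(unitInterval, X)) fun s t => hψ.1) t
  have hinj : Function.Injective h := by
    intro y z hyz
    obtain ⟨s, rfl⟩ := hsurj y
    obtain ⟨t, rfl⟩ := hsurj z
    exact hψ.2 (by rwa [hcomp, hcomp] at hyz)
  have hrange : range h = range g := by rw [← hsurj.range_comp, ← funext hcomp]; rfl
  have h0 : h ⟨φ 0, right_mem_Icc.2 hlt.le⟩ = a := (hcomp 0).trans g.source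
  have h1 : h ⟨φ 1, left_mem_Icc.2 hlt.le⟩ = b := (hcomp 1).trans g.target
  rw [← hrange, ← h0, ← h1]
  exact (IsArc.of_injective_Icc hlt h.continuous hinj).symm

lemma exists_isArc_of_joinedIn {X : Type*} [MetricSpace X] {S : Set X} {a b : X}
    (h : JoinedIn S a b) (hab : a ≠ b) : ∃ α ⊆ S, IsArc a b α := by
  obtain ⟨γ, hγ⟩ := h
  obtain ⟨g, hgγ, hg⟩ := exists_path_ordConnected_preimage γ
  exact ⟨range g, hgγ.trans (range_subset_iff.2 hγ), isArc_range_of_ordConnected hab hg⟩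

/-! ### Paths in open connected sets -/

section LocallyConnected

lemma exists_isOpen_isConnected_subset {X : Type*} [TopologicalSpace X] [LocallyConnectedSpace X]
    {x : X} {U : Set X} (hU : U ∈ nhds x) : ∃ V ⊆ U, IsOpen V ∧ x ∈ V ∧ IsConnected V :=
  locallyConnectedSpace_iff_subsets_isOpen_isConnected.1 inferInstance x U hU

/-- Paths in an ambient space `E` that shadow a chain of small open connected subsets of `V`:
every link joins the images under `κ` of two points of such a set `W` and stays within `ε` of
them. They are the approximations in the proof that open connected sets are path connected. -/
inductive ChainPath {X E : Type*} [MetricSpace X] [MetricSpace E] (κ : X → E) (V : Set X) (ε : ℝ) :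
    (a b : X) → Path (κ a) (κ b) → Prop
  | link {a b : X} (W : Set X) (g : Path (κ a) (κ b)) (hWo : IsOpen W) (hWc : IsPreconnected W)
      (hWV : W ⊆ V) (ha : a ∈ W) (hb : b ∈ W) (hdist : ∀ x ∈ W, ∀ y ∈ W, dist x y ≤ ε)
      (hg : ∀ t, dist (g t) (κ a) ≤ ε) : ChainPath κ V ε a b g
  | trans {a b c : X} {g : Path (κ a) (κ b)} {h : Path (κ b) (κ c)}
      (hg : ChainPath κ V ε a b g) (hh : ChainPath κ V ε b c h) : ChainPath κ V ε a c (g.trans h)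

namespace ChainPath

variable {X : Type*} [MetricSpace X] {V : Set X} {a b : X} {ε : ℝ}

lemma mono {E : Type*} [MetricSpace E] {κ : X → E} {V' : Set X} (hVV' : V ⊆ V')
    {g : Path (κ a) (κ b)} (h : ChainPath κ V ε a b g) : ChainPath κ V' ε a b g := by
  induction h with
  | link W g hWo hWc hWV ha hb hdist hg => exact link W g hWo hWc (hWV.trans hVV') ha hb hdist hg
  | trans _ _ ih₁ ih₂ => exact trans ih₁ ih₂

lemma exists_dist_le {E : Type*} [MetricSpace E] {κ : X → E} {g : Path (κ a) (κ b)}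
    (h : ChainPath κ V ε a b g) (t : unitInterval) : ∃ x ∈ V, dist (g t) (κ x) ≤ ε := by
  induction h generalizing t with
  | @link a _ _ g _ _ hWV ha _ _ hg => exact ⟨a, hWV ha, hg t⟩
  | trans _ _ ih₁ ih₂ =>
    rw [Path.trans_apply]
    split_ifs
    · exact ih₁ _
    · exact ih₂ _

variable [LocallyConnectedSpace X] {E : Type*} [NormedAddCommGroup E] [NormedSpace ℝ E] {κ : X → E}

lemma exists_of_isPreconnected (hκ : Isometry κ) (hVo : IsOpen V) (hVc : IsPreconnected V)
    (ha : a ∈ V) (hb : b ∈ V) (hε : 0 < ε) : ∃ g, ChainPath κ V ε a b g := by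
  refine hVc.induction₂' (fun a b => ∃ g, ChainPath κ V ε a b g) (fun x hx => ?_)
    (fun x y z _ _ _ ⟨g, hg⟩ ⟨h, hh⟩ => ⟨_, hg.trans hh⟩) ha hb
  obtain ⟨W, hW, hWo, hxW, hWc⟩ := exists_isOpen_isConnected_subset
    (Filter.inter_mem (hVo.mem_nhds hx) (ball_mem_nhds x (half_pos hε)))
  have hdist (y) (hy : y ∈ W) (z) (hz : z ∈ W) : dist y z ≤ ε := by
    linarith [dist_triangle_right y z x, mem_ball.1 (hW hy).2, mem_ball.1 (hW hz).2]
  have hlink (y) (hy : y ∈ W) (z) (hz : z ∈ W) : ∃ g, ChainPath κ V ε y z g := by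
    have hj : JoinedIn (closedBall (κ y) ε) (κ y) (κ z) :=
      ((convex_closedBall (κ y) ε).isPathConnected ⟨κ y, mem_closedBall_self hε.le⟩).joinedIn _
        (mem_closedBall_self hε.le) _ (by rw [mem_closedBall, hκ.dist_eq]; exact hdist z hz y hy)
    exact ⟨hj.somePath, link W _ hWo hWc.isPreconnected (hW.trans inter_subset_left) hy hz hdist
      hj.somePath_mem⟩
  filter_upwards [mem_nhdsWithin_of_mem_nhds (hWo.mem_nhds hxW)] with y hy
  exact ⟨hlink x hxW y hy, hlink y hy x hxW⟩

lemma exists_refinement (hκ : Isometry κ) {δ : ℝ} (hδ : 0 < δ) (hδε : δ ≤ ε)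
    {g : Path (κ a) (κ b)} (h : ChainPath κ V ε a b g) :
    ∃ g', ChainPath κ V δ a b g' ∧ ∀ t, dist (g t) (g' t) ≤ 3 * ε := by
  induction h with
  | @link a b W g hWo hWc hWV ha hb hdist hg =>
    obtain ⟨g', hg'⟩ := exists_of_isPreconnected hκ hWo hWc ha hb hδ
    refine ⟨g', hg'.mono hWV, fun t => ?_⟩
    obtain ⟨x, hx, hxt⟩ := hg'.exists_dist_le t
    have hxa : dist (κ x) (κ a) ≤ ε := by rw [hκ.dist_eq]; exact hdist x hx a ha
    linarith [dist_triangle_right (g t) (g' t) (κ a), hg t, dist_triangle (g' t) (κ x) (κ a)]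
  | trans _ _ ih₁ ih₂ =>
    obtain ⟨g₁, hg₁, h₁⟩ := ih₁
    obtain ⟨g₂, hg₂, h₂⟩ := ih₂
    refine ⟨_, hg₁.trans hg₂, fun t => ?_⟩
    rw [Path.trans_apply, Path.trans_apply]
    split_ifs
    · exact h₁ _
    · exact h₂ _

end ChainPath

lemma exists_path_tendsto_of_forall_dist_le {E : Type*} [MetricSpace E] [CompleteSpace E] {x y : E}
    {P : ℕ → Path x y → Prop} {C : ℝ} (h₀ : ∃ g, P 0 g)
    (h : ∀ n g, P n g → ∃ g', P (n + 1) g' ∧ ∀ t, dist (g t) (g' t) ≤ C * (1 / 2) ^ n) :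
    ∃ (g : ℕ → Path x y) (G : Path x y), (∀ n, P n (g n)) ∧
      ∀ t, Filter.Tendsto (g · t) Filter.atTop (nhds (G t)) := by
  choose! next hnextP hnext using h
  obtain ⟨g₀, hg₀⟩ := h₀
  let g : ℕ → Path x y := fun n => Nat.rec g₀ next n
  have hP (n : ℕ) : P n (g n) := Nat.rec hg₀ (fun n => hnextP n (g n)) n
  have hdist (n : ℕ) : dist (g n).toContinuousMap (g (n + 1)).toContinuousMap ≤ C * (1 / 2) ^ n :=
    (ContinuousMap.dist_le (dist_nonneg.trans (hnext n (g n) (hP n) 0))).2 (hnext n (g n) (hP n))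
  obtain ⟨G, hG⟩ := cauchySeq_tendsto_of_complete
    (cauchySeq_of_le_geometric (1 / 2) C (by norm_num) hdist)
  have hGt (t : unitInterval) : Filter.Tendsto (g · t) Filter.atTop (nhds (G t)) :=
    ((ContinuousEvalConst.continuous_eval_const (F := C(unitInterval, E)) t).tendsto G).comp hG
  exact ⟨g, ⟨G, tendsto_nhds_unique (hGt 0) (by simp), tendsto_nhds_unique (hGt 1) (by simp)⟩,
    hP, hGt⟩

variable {X : Type*} [MetricSpace X] [CompleteSpace X] [LocallyConnectedSpace X] {V : Set X}
  {a b : X}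

lemma joinedIn_closure_of_isometry {E : Type*} [NormedAddCommGroup E] [NormedSpace ℝ E]
    [CompleteSpace E] {κ : X → E} (hκ : Isometry κ) (hVo : IsOpen V) (hVc : IsPreconnected V)
    (ha : a ∈ V) (hb : b ∈ V) : JoinedIn (closure V) a b := by
  obtain ⟨g, G, hg, hG⟩ := exists_path_tendsto_of_forall_dist_le
    (P := fun n => ChainPath κ V ((1 / 2) ^ n) a b)
    (ChainPath.exists_of_isPreconnected hκ hVo hVc ha hb (by positivity))
    fun n g hg => hg.exists_refinement hκ (by positivity)
      (pow_le_pow_of_le_one (by norm_num) (by norm_num) n.le_succ)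
  have hmem (t : unitInterval) : G t ∈ κ '' closure V := by
    have hcl : IsClosed (κ '' closure V) := hκ.isClosedEmbedding.isClosedMap _ isClosed_closure
    choose x hxV hx using fun n => (hg n).exists_dist_le t
    refine hcl.mem_of_tendsto (b := Filter.atTop) (f := fun n => κ (x n)) ?_
      (.of_forall fun n => mem_image_of_mem κ (subset_closure (hxV n)))
    refine ((hG t).congr_dist (squeeze_zero (fun _ => dist_nonneg) hx ?_))
    exact tendsto_pow_atTop_nhds_zero_of_lt_one (by norm_num) (by norm_num)
  choose f hfV hf using hmem
  have hfc : Continuous f :=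
    hκ.isUniformInducing.isInducing.continuous_iff.2 (G.continuous.congr fun t => (hf t).symm)
  exact ⟨⟨⟨f, hfc⟩, hκ.injective ((hf 0).trans G.source), hκ.injective ((hf 1).trans G.target)⟩,
    hfV⟩

variable [TopologicalSpace.SeparableSpace X]

lemma joinedIn_of_isOpen_of_isPreconnected (hVo : IsOpen V) (hVc : IsPreconnected V) (ha : a ∈ V)
    (hb : b ∈ V) : JoinedIn V a b := by
  refine hVc.induction₂' (JoinedIn V) (fun x hx => ?_) (fun _ _ _ _ _ _ h h' => h.trans h') ha hb
  obtain ⟨ε, hε, hεV⟩ := Metric.nhds_basis_closedBall.mem_iff.1 (hVo.mem_nhds hx)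
  obtain ⟨W, hW, hWo, hxW, hWc⟩ := exists_isOpen_isConnected_subset (closedBall_mem_nhds x hε)
  have hWV : closure W ⊆ V := (closure_minimal hW isClosed_closedBall).trans hεV
  filter_upwards [mem_nhdsWithin_of_mem_nhds (hWo.mem_nhds hxW)] with y hy
  have h : JoinedIn V x y := (joinedIn_closure_of_isometry (kuratowskiEmbedding.isometry X) hWo
    hWc.isPreconnected hxW hy).mono hWV
  exact ⟨h, h.symm⟩

end LocallyConnected

/-! ### Cyclicly connected sets -/

lemma IsJordanCurve.cyclicallyConnected {X : Type} [TopologicalSpace X] {J : Set X}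
    (hJ : IsJordanCurve J) : CyclicallyConnected J :=
  fun _ hx _ hy => ⟨J, subset_rfl, hJ, hx, hy⟩

/-- Close up a crosscut of `J` through `z` by the arc of `J` through `y`. -/
lemma IsJordanCurve.exists_isJordanCurve_through {X : Type} [TopologicalSpace X] [T2Space X]
    {J α β : Set X} {a b y z : X} (hJ : IsJordanCurve J) (hα : IsArc a z α) (hβ : IsArc z b β)
    (hαβ : α ∩ β ⊆ {z}) (ha : a ∈ J) (hb : b ∈ J) (hz : z ∉ J) (hy : y ∈ J) :
    ∃ J' ⊆ α ∪ β ∪ J, IsJordanCurve J' ∧ z ∈ J' ∧ y ∈ J' ∧ (J ∩ J').Nontrivial := by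
  obtain ⟨r, hr, s, hs, γ, hγ, hzγ, hrs, hγJ⟩ := hα.exists_crosscut hβ hαβ
    hJ.isCompact.isClosed ⟨a, hα.left_mem, ha⟩ ⟨b, hβ.right_mem, hb⟩ hz
  obtain ⟨δ, hδJ, hδ, hyδ⟩ := hJ.exists_arc_through hr hs hrs.ne hy
  exact ⟨γ ∪ δ, union_subset_union hγ hδJ,
    hrs.isJordanCurve_union hδ ((inter_subset_inter_right _ hδJ).trans hγJ.subset),
    Or.inl hzγ, Or.inr hyδ, r, ⟨hr, Or.inl hrs.left_mem⟩, s, ⟨hs, Or.inl hrs.right_mem⟩, hrs.ne⟩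

namespace CyclicallyConnected

section Union

variable {X : Type} [TopologicalSpace X] {Z Z' : Set X} {a p q : X}

lemma joinedIn_sdiff_singleton (hZ : CyclicallyConnected Z) (hp : p ∈ Z \ {a})
    (hq : q ∈ Z \ {a}) : JoinedIn (Z \ {a}) p q := by
  rcases eq_or_ne p q with rfl | hpq
  · exact JoinedIn.refl hp
  obtain ⟨J, hJZ, hJ, hpJ, hqJ⟩ := hZ p hp.1 q hq.1
  obtain ⟨α, hαJ, hα, haα⟩ := hJ.exists_arc_avoiding hpJ hqJ hpq (Ne.symm hp.2) (Ne.symm hq.2)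
  exact hα.joinedIn.mono (subset_sdiff_singleton (hαJ.trans hJZ) haα)

lemma union_of_forall_mem (hZ : CyclicallyConnected Z) (hZ' : CyclicallyConnected Z')
    (h : ∀ x ∈ Z, ∀ y ∈ Z', ∃ J ⊆ Z ∪ Z', IsJordanCurve J ∧ x ∈ J ∧ y ∈ J) :
    CyclicallyConnected (Z ∪ Z') := by
  rintro x (hx | hx) y (hy | hy)
  · obtain ⟨J, hJ, hJxy⟩ := hZ x hx y hy
    exact ⟨J, hJ.trans subset_union_left, hJxy⟩
  · exact h x hx y hy
  · obtain ⟨J, hJZ, hJ, hyJ, hxJ⟩ := h y hy x hx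
    exact ⟨J, hJZ, hJ, hxJ, hyJ⟩
  · obtain ⟨J, hJ, hJxy⟩ := hZ' x hx y hy
    exact ⟨J, hJ.trans subset_union_right, hJxy⟩

end Union

variable {X : Type} [MetricSpace X] {Z Z' J : Set X} {p q y : X}

lemma exists_arcs_through (hZ : CyclicallyConnected Z) (hp : p ∈ Z) (hq : q ∈ Z) (hy : y ∈ Z)
    (hpq : p ≠ q) (hyp : y ≠ p) (hyq : y ≠ q) :
    ∃ α ⊆ Z, ∃ β ⊆ Z, IsArc p y α ∧ IsArc y q β ∧ α ∩ β ⊆ {y} := by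
  obtain ⟨J, hJZ, hJ, hpJ, hyJ⟩ := hZ p hp y hy
  have through {r : X} (hrJ : r ∈ J) (hrp : r ≠ p) (hry : y ≠ r) :
      ∃ α ⊆ J, ∃ β ⊆ J, IsArc p y α ∧ IsArc y r β ∧ α ∩ β = {y} := by
    obtain ⟨α, hαJ, hα, hyα⟩ := hJ.exists_arc_through hpJ hrJ hrp.symm hyJ
    obtain ⟨α₁, α₂, h₁, h₂, rfl, hI⟩ := hα.split hyα hyp hry
    exact ⟨α₁, subset_union_left.trans hαJ, α₂, subset_union_right.trans hαJ, h₁, h₂, hI⟩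
  by_cases hqJ : q ∈ J
  · obtain ⟨α, hα, β, hβ, h₁, h₂, hI⟩ := through hqJ hpq.symm hyq
    exact ⟨α, hα.trans hJZ, β, hβ.trans hJZ, h₁, h₂, hI.subset⟩
  obtain ⟨κ, hκZ, hκ⟩ := exists_isArc_of_joinedIn
    (hZ.joinedIn_sdiff_singleton ⟨hq, hpq.symm⟩ ⟨hy, hyp⟩) hyq.symm
  obtain ⟨r, hrJ, μ, hμκ, hμ, hμJ⟩ :=
    hκ.exists_first_hit hJ.isCompact.isClosed ⟨y, hκ.right_mem, hyJ⟩ hqJ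
  have hμZ : μ ⊆ Z := hμκ.trans (hκZ.trans sdiff_subset)
  have hrp : r ≠ p := (hκZ (hμκ hμ.right_mem)).2
  have hσμ {σ : Set X} (hσ : σ ⊆ J) : σ ∩ μ ⊆ {r} := fun z hz => hμJ.subset ⟨hz.2, hσ hz.1⟩
  by_cases hyr : y = r
  · subst hyr
    obtain ⟨α, hαJ, hα, -⟩ := hJ.exists_arc_through hpJ hyJ hrp.symm hyJ
    exact ⟨α, hαJ.trans hJZ, μ, hμZ, hα, hμ.symm, hσμ hαJ⟩
  · obtain ⟨α, hα, β, hβ, h₁, h₂, hI⟩ := through hrJ hrp hyr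
    refine ⟨α, hα.trans hJZ, β ∪ μ, union_subset (hβ.trans hJZ) hμZ, h₁,
      h₂.trans hμ.symm (hσμ hβ), ?_⟩
    rw [inter_union_distrib_left]
    refine union_subset hI.subset fun z hz => hI.subset ⟨hz.1, ?_⟩
    exact (show z = r from hσμ hα hz) ▸ h₂.right_mem

lemma exists_isJordanCurve_through (hZ : CyclicallyConnected Z) (hJ : IsJordanCurve J)
    (h : (Z ∩ J).Nontrivial) {z : X} (hz : z ∈ Z) (hy : y ∈ J) :
    ∃ J' ⊆ Z ∪ J, IsJordanCurve J' ∧ z ∈ J' ∧ y ∈ J' ∧ (J ∩ J').Nontrivial := by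
  by_cases hzJ : z ∈ J
  · refine ⟨J, subset_union_right, hJ, hzJ, hy, ?_⟩
    rw [inter_self]
    exact h.mono inter_subset_right
  obtain ⟨a, ha, b, hb, hab⟩ := h
  obtain ⟨α, hαZ, β, hβZ, hα, hβ, hI⟩ := hZ.exists_arcs_through ha.1 hb.1 hz hab
    (fun h => hzJ (h ▸ ha.2)) (fun h => hzJ (h ▸ hb.2))
  obtain ⟨J', hJ'sub, hJ'⟩ := hJ.exists_isJordanCurve_through hα hβ hI ha.2 hb.2 hzJ hy
  exact ⟨J', hJ'sub.trans (union_subset_union_left _ (union_subset hαZ hβZ)), hJ'⟩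

lemma union_isJordanCurve (hZ : CyclicallyConnected Z) (hJ : IsJordanCurve J)
    (h : (Z ∩ J).Nontrivial) : CyclicallyConnected (Z ∪ J) := by
  refine hZ.union_of_forall_mem hJ.cyclicallyConnected fun z hz y hy => ?_
  obtain ⟨J', hJ'sub, hJ', hzJ', hyJ', -⟩ := hZ.exists_isJordanCurve_through hJ h hz hy
  exact ⟨J', hJ'sub, hJ', hzJ', hyJ'⟩

lemma union (hZ : CyclicallyConnected Z) (hZ' : CyclicallyConnected Z')
    (h : (Z ∩ Z').Nontrivial) : CyclicallyConnected (Z ∪ Z') := by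
  obtain ⟨a, ha, b, hb, hab⟩ := h
  refine hZ.union_of_forall_mem hZ' fun y hy z hz => ?_
  obtain ⟨J, hJZ', hJ, haJ, hbJ⟩ := hZ' a ha.2 b hb.2
  obtain ⟨J', hJ'sub, hJ', hzJ', -, hJJ'⟩ :=
    hZ'.exists_isJordanCurve_through hJ ⟨a, ⟨ha.2, haJ⟩, b, ⟨hb.2, hbJ⟩, hab⟩ hz haJ
  have hZJ := hZ.union_isJordanCurve hJ ⟨a, ⟨ha.1, haJ⟩, b, ⟨hb.1, hbJ⟩, hab⟩
  have hZJJ' := hZJ.union_isJordanCurve hJ' (hJJ'.mono (inter_subset_inter_left _ (by simp)))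
  have hsub : Z ∪ J ∪ J' ⊆ Z ∪ Z' := by
    rw [union_assoc]
    exact union_subset_union_right _
      (union_subset hJZ' (hJ'sub.trans (union_subset subset_rfl hJZ')))
  obtain ⟨K, hK, hKyz⟩ := hZJJ' y (Or.inl (Or.inl hy)) z (Or.inr hzJ')
  exact ⟨K, hK.trans hsub, hKyz⟩

end CyclicallyConnected

/-- Two disjoint arcs `α` and `β` in `Z` leading from `p` and `q` to the set `S`, which they meet
only in their end points `p'` and `q'`. -/
structure IsLinkage {X : Type*} [TopologicalSpace X] (Z S : Set X) (p q p' q' : X)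
    (α β : Set X) : Prop where
  left : IsArc p p' α
  right : IsArc q q' β
  left_subset : α ⊆ Z
  right_subset : β ⊆ Z
  left_inter : α ∩ S = {p'}
  right_inter : β ∩ S = {q'}
  disjoint : Disjoint α β

namespace IsLinkage

variable {X : Type*} [TopologicalSpace X] {Z S α β : Set X} {p q p' q' : X}

lemma symm (h : IsLinkage Z S p q p' q' α β) : IsLinkage Z S q p q' p' β α :=
  ⟨h.right, h.left, h.right_subset, h.left_subset, h.right_inter, h.left_inter, h.disjoint.symm⟩

lemma left_mem (h : IsLinkage Z S p q p' q' α β) : p' ∈ S :=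
  (h.left_inter.symm.subset rfl).2

lemma right_mem (h : IsLinkage Z S p q p' q' α β) : q' ∈ S := h.symm.left_mem

/-- If both arcs arrive at the same point `a`, one of them can be rerouted along a detour. -/
lemma exists_of_detour {X : Type*} [MetricSpace X] {Z S α β η : Set X} {a b p q r : X}
    (hS : IsClosed S) (hα : IsArc p a α) (hβ : IsArc q a β) (hη : IsArc r b η) (hαZ : α ⊆ Z)
    (hβZ : β ⊆ Z) (hηZ : η ⊆ Z) (hαS : α ∩ S = {a}) (hβS : β ∩ S = {a}) (hαβ : α ∩ β ⊆ {a})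
    (hηβ : Disjoint η β) (hr : r ∈ α) (hra : r ≠ a) (hb : b ∈ S) :
    ∃ p' ε, IsLinkage Z S p q p' a ε β := by
  have hpS : p ∉ S := fun h => hα.ne (hαS.subset ⟨hα.left_mem, h⟩)
  have hjoin : JoinedIn (α \ {a} ∪ η) p b :=
    ((hα.joinedIn_sdiff_right hr hra).mono subset_union_left).trans
      (hη.joinedIn.mono subset_union_right)
  obtain ⟨δ, hδ, hδpb⟩ := exists_isArc_of_joinedIn hjoin fun h => hpS (h ▸ hb)
  obtain ⟨p', -, ε, hεδ, hε, hεS⟩ := hδpb.exists_first_hit hS ⟨b, hδpb.right_mem, hb⟩ hpS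
  refine ⟨p', ε, hε, hβ, ?_, hβZ, hεS, hβS, ?_⟩
  · exact hεδ.trans (hδ.trans (union_subset (sdiff_subset.trans hαZ) hηZ))
  · refine Disjoint.mono_left (hεδ.trans hδ) (disjoint_union_left.2 ⟨?_, hηβ⟩)
    exact disjoint_left.2 fun z hz hzβ => hz.2 (hαβ ⟨hz.1, hzβ⟩)

end IsLinkage

lemma CyclicallyConnected.exists_linkage {X : Type} [MetricSpace X] {Z S : Set X} {p q : X}
    (hZ : CyclicallyConnected Z) (hS : IsClosed S) (hZS : (Z ∩ S).Nontrivial) (hp : p ∈ Z)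
    (hq : q ∈ Z) (hpS : p ∉ S) (hqS : q ∉ S) (hpq : p ≠ q) :
    ∃ p' q' α β, IsLinkage Z S p q p' q' α β := by
  obtain ⟨a, ha, b, hb, hab⟩ := hZS
  have hpa : p ≠ a := fun h => hpS (h ▸ ha.2)
  obtain ⟨α₀, hα₀Z, β₀, hβ₀Z, hα₀, hβ₀, hI₀⟩ := hZ.exists_arcs_through hp hq ha.1 hpq hpa.symm
    (fun h => hqS (h ▸ ha.2))
  obtain ⟨p', hp', α, hαα₀, hα, hαS⟩ := hα₀.exists_first_hit hS ⟨a, hα₀.right_mem, ha.2⟩ hpS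
  obtain ⟨q', hq', β, hββ₀, hβ, hβS⟩ := hβ₀.symm.exists_first_hit hS ⟨a, hβ₀.left_mem, ha.2⟩ hqS
  have hI : α ∩ β ⊆ {a} := (inter_subset_inter hαα₀ hββ₀).trans hI₀
  have hαZ := hαα₀.trans hα₀Z
  have hβZ := hββ₀.trans hβ₀Z
  by_cases haαβ : a ∈ α ∩ β
  swap
  · refine ⟨p', q', α, β, hα, hβ, hαZ, hβZ, hαS, hβS, disjoint_left.2 fun z hzα hzβ => haαβ ?_⟩
    exact (show z = a from hI ⟨hzα, hzβ⟩) ▸ ⟨hzα, hzβ⟩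
  obtain rfl : a = p' := hαS.subset ⟨haαβ.1, ha.2⟩
  obtain rfl : a = q' := hβS.subset ⟨haαβ.2, ha.2⟩
  obtain ⟨η₀, hη₀Z, hη₀⟩ := exists_isArc_of_joinedIn
    (hZ.joinedIn_sdiff_singleton ⟨hb.1, hab.symm⟩ ⟨hp, hpa⟩) fun h => hpS (h ▸ hb.2)
  have hbαβ : b ∉ α ∪ β := by
    rintro (h | h)
    exacts [hab.symm (hαS.subset ⟨h, hb.2⟩), hab.symm (hβS.subset ⟨h, hb.2⟩)]
  obtain ⟨r, hr, η, hηη₀, hη, hηI⟩ := hη₀.exists_first_hit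
    (hα.isCompact.isClosed.union hβ.isCompact.isClosed)
    ⟨p, hη₀.right_mem, Or.inl hα.left_mem⟩ hbαβ
  have hra : r ≠ a := (hη₀Z (hηη₀ hη.right_mem)).2
  have hηZ : η ⊆ Z := hηη₀.trans (hη₀Z.trans sdiff_subset)
  have hdisj {σ : Set X} (hσ : σ ⊆ α ∪ β) (hrσ : r ∉ σ) : Disjoint η σ :=
    disjoint_left.2 fun z hzη hzσ =>
      hrσ ((show z = r from hηI.subset ⟨hzη, hσ hzσ⟩) ▸ hzσ)
  rcases hr with hr | hr
  · obtain ⟨p', ε, h⟩ := IsLinkage.exists_of_detour hS hα hβ hη.symm hαZ hβZ hηZ hαS hβS hI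
      (hdisj subset_union_right fun h => hra (hI ⟨hr, h⟩)) hr hra hb.2
    exact ⟨p', a, ε, β, h⟩
  · obtain ⟨q', ε, h⟩ := IsLinkage.exists_of_detour hS hβ hα hη.symm hβZ hαZ hηZ hβS hαS
      (inter_comm α β ▸ hI) (hdisj subset_union_left fun h => hra (hI ⟨h, hr⟩)) hr hra hb.2
    exact ⟨a, q', α, ε, h.symm⟩

namespace MaximalCyclic

variable {X : Type} [MetricSpace X] {T J α : Set X} {a b : X}

lemma subset_of_isJordanCurve (hT : MaximalCyclic T) (hJ : IsJordanCurve J)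
    (h : (T ∩ J).Nontrivial) : J ⊆ T := by
  rw [← hT.2.2 _ (hT.2.1.union_isJordanCurve hJ h) subset_union_left]
  exact subset_union_right

lemma subset_of_isArc (hT : MaximalCyclic T) (hα : IsArc a b α) (ha : a ∈ T) (hb : b ∈ T) :
    α ⊆ T := by
  intro y hy
  by_contra hyT
  obtain ⟨J, hJT, hJ, haJ, hbJ⟩ := hT.2.1 a ha b hb
  obtain ⟨α₁, α₂, h₁, h₂, -, hI⟩ :=
    hα.split hy (fun h => hyT (h ▸ ha)) (fun h => hyT (h ▸ hb))
  obtain ⟨J', -, hJ', hyJ', -, hJJ'⟩ :=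
    hJ.exists_isJordanCurve_through h₁ h₂ hI.subset haJ hbJ (fun h => hyT (hJT h)) haJ
  exact hyT (hT.subset_of_isJordanCurve hJ' (hJJ'.mono (inter_subset_inter_left _ hJT)) hyJ')

end MaximalCyclic

/-! ### Chains of cyclicly connected sets -/

/-- Run through the `n`-th path on `[n, n + 1]` and then reparametrize `[0, ∞]` by `s ↦ s⁻¹ - 1`. -/
lemma joinedIn_insert_iUnion {X : Type*} [TopologicalSpace X] {S : ℕ → Set X} {p : ℕ → X} {x : X}
    (h : ∀ n, JoinedIn (S n) (p n) (p (n + 1)))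
    (hx : ∀ U ∈ nhds x, ∀ᶠ n in Filter.atTop, S n ⊆ U) :
    JoinedIn (insert x (⋃ n, S n)) (p 0) x := by
  choose γ hγ using h
  let F : ℝ → X := fun t => (γ ⌊t⌋₊).extend (t - ⌊t⌋₊)
  have hFmem (t : ℝ) : F t ∈ S ⌊t⌋₊ := hγ _ _
  have hFeq (n : ℕ) : EqOn F (fun t => (γ n).extend (t - n)) (Icc n (n + 1)) := by
    rintro t ⟨hn, ht⟩
    rcases ht.eq_or_lt with rfl | hlt
    · have : ⌊(n + 1 : ℝ)⌋₊ = n + 1 := by exact_mod_cast Nat.floor_natCast (n + 1)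
      simp [F, this]
    · obtain rfl : ⌊t⌋₊ = n := Nat.floor_eq_on_Ico n t ⟨hn, hlt⟩
      rfl
  have hcover : Ici (0 : ℝ) ⊆ ⋃ n : ℕ, Icc (n : ℝ) (n + 1) := fun t ht =>
    mem_iUnion.2 ⟨⌊t⌋₊, Nat.floor_le ht, (Nat.lt_floor_add_one t).le⟩
  have hfin : LocallyFinite fun n : ℕ => Icc (n : ℝ) (n + 1) := fun t =>
    ⟨Iio (⌊t⌋₊ + 1), Iio_mem_nhds (Nat.lt_floor_add_one t),
      (finite_Iic ⌊t⌋₊).subset fun n ⟨s, hs, hst⟩ =>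
        Nat.lt_succ_iff.1 (by exact_mod_cast hs.1.trans_lt hst)⟩
  have hF : ContinuousOn F (Ici 0) := (hfin.continuousOn_iUnion (fun _ => isClosed_Icc) fun n =>
    ((γ n).continuous_extend.comp (by fun_prop)).continuousOn.congr (hFeq n)).mono hcover
  have hFx : Filter.Tendsto F Filter.atTop (nhds x) := fun U hU =>
    (tendsto_nat_floor_atTop.eventually (hx U hU)).mono fun t ht => ht (hFmem t)
  let G : ℝ → X := Function.update (fun s => F (s⁻¹ - 1)) 0 x
  have hG : ContinuousOn G (Icc 0 1) := by
    rw [continuousOn_update_iff]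
    refine ⟨hF.comp ?_ fun s hs => ?_, fun _ => hFx.comp ?_⟩
    · exact (continuousOn_inv₀.mono fun s hs => hs.2).sub continuousOn_const
    · exact sub_nonneg.2 ((one_le_inv₀ (hs.1.1.lt_of_ne' hs.2)).2 hs.1.2)
    · refine (Filter.tendsto_atTop_add_const_right _ (-1) tendsto_inv_nhdsGT_zero).mono_left ?_
      exact nhdsWithin_mono _ fun s hs => hs.1.1.lt_of_ne' hs.2
  refine (JoinedIn.ofLine hG (by simp [G]) (by simp [G, F]) ?_).symm
  rintro _ ⟨s, -, rfl⟩
  rcases eq_or_ne s 0 with rfl | hs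
  · simp [G]
  · simpa [G, hs] using Or.inr ⟨_, hFmem _⟩

/-- A chain of compact cyclicly connected sets, each of which meets only its neighbours, converging
to the point `x`. -/
structure IsCyclicChain {X : Type} [TopologicalSpace X] (K : ℕ → Set X) (x : X) : Prop where
  isCompact : ∀ n, IsCompact (K n)
  cyclicallyConnected : ∀ n, CyclicallyConnected (K n)
  nontrivial_inter : ∀ n, (K n ∩ K (n + 1)).Nontrivial
  disjoint : ∀ n m, n + 2 ≤ m → Disjoint (K n) (K m)
  eventually_subset : ∀ U ∈ nhds x, ∀ᶠ n in Filter.atTop, K n ⊆ U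

namespace IsLinkage

variable {X : Type*} [TopologicalSpace X] {K : ℕ → Set X} {r s : ℕ → X} {α β : ℕ → Set X}

lemma disjoint_of_lt (hKK : ∀ n m, n + 2 ≤ m → Disjoint (K n) (K m))
    (h : ∀ n, IsLinkage (K n) (K (n + 1)) (r n) (s n) (r (n + 1)) (s (n + 1)) (α n) (β n))
    {n m : ℕ} (hnm : n < m) : Disjoint (α n) (β m) := by
  rcases (Nat.succ_le_of_lt hnm).eq_or_lt with rfl | hlt
  · refine disjoint_left.2 fun y hyα hyβ => ?_
    obtain rfl : y = r (n + 1) := (h n).left_inter.subset ⟨hyα, (h (n + 1)).right_subset hyβ⟩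
    exact disjoint_left.1 (h (n + 1)).disjoint (h (n + 1)).left.left_mem hyβ
  · exact (hKK n m hlt).mono (h n).left_subset (h m).right_subset

lemma disjoint_iUnion (hKK : ∀ n m, n + 2 ≤ m → Disjoint (K n) (K m))
    (h : ∀ n, IsLinkage (K n) (K (n + 1)) (r n) (s n) (r (n + 1)) (s (n + 1)) (α n) (β n)) :
    Disjoint (⋃ n, α n) (⋃ n, β n) := by
  refine disjoint_iUnion_left.2 fun n => disjoint_iUnion_right.2 fun m => ?_
  rcases lt_trichotomy n m with hlt | rfl | hlt
  · exact disjoint_of_lt hKK h hlt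
  · exact (h n).disjoint
  · exact (disjoint_of_lt hKK (fun n => (h n).symm) hlt).symm

end IsLinkage

namespace IsCyclicChain

variable {X : Type} [MetricSpace X] {K : ℕ → Set X} {x p q : X}

lemma exists_linkage_seq (hK : IsCyclicChain K x) (hp : p ∈ K 0 \ K 1) (hq : q ∈ K 0 \ K 1)
    (hpq : p ≠ q) :
    ∃ (r s : ℕ → X) (α β : ℕ → Set X), r 0 = p ∧ s 0 = q ∧
      ∀ n, IsLinkage (K n) (K (n + 1)) (r n) (s n) (r (n + 1)) (s (n + 1)) (α n) (β n) := by
  let P : ℕ → X × X → Prop := fun n z =>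
    z.1 ∈ K n \ K (n + 1) ∧ z.2 ∈ K n \ K (n + 1) ∧ z.1 ≠ z.2
  have hstep (n : ℕ) (z : X × X) (hz : P n z) : ∃ (z' : X × X) (αβ : Set X × Set X),
      P (n + 1) z' ∧ IsLinkage (K n) (K (n + 1)) z.1 z.2 z'.1 z'.2 αβ.1 αβ.2 := by
    obtain ⟨p', q', α, β, h⟩ := (hK.cyclicallyConnected n).exists_linkage
      (hK.isCompact (n + 1)).isClosed (hK.nontrivial_inter n) hz.1.1 hz.2.1.1 hz.1.2 hz.2.1.2
      hz.2.2
    have hd := disjoint_left.1 (hK.disjoint n (n + 2) le_rfl)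
    exact ⟨(p', q'), (α, β), ⟨⟨h.left_mem, hd (h.left_subset h.left.right_mem)⟩,
      ⟨h.right_mem, hd (h.right_subset h.right.right_mem)⟩,
      h.disjoint.ne_of_mem h.left.right_mem h.right.right_mem⟩, h⟩
  choose! next link hnext hlink using hstep
  let z : ℕ → X × X := fun n => Nat.rec (p, q) next n
  have hz (n : ℕ) : P n (z n) := Nat.rec ⟨hp, hq, hpq⟩ (fun n => hnext n (z n)) n
  exact ⟨fun n => (z n).1, fun n => (z n).2, fun n => (link n (z n)).1, fun n => (link n (z n)).2,
    rfl, rfl, fun n => hlink n (z n) (hz n)⟩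

lemma exists_isArc_right (hK : IsCyclicChain K x) {r : ℕ → X} {γ : ℕ → Set X}
    (hγ : ∀ n, IsArc (r n) (r (n + 1)) (γ n)) (hγK : ∀ n, γ n ⊆ K n) (hx : x ∉ K 0) :
    ∃ δ ⊆ insert x (⋃ n, γ n), IsArc (r 0) x δ := by
  refine exists_isArc_of_joinedIn (joinedIn_insert_iUnion (fun n => (hγ n).joinedIn) ?_) ?_
  · exact fun U hU => (hK.eventually_subset U hU).mono fun n hn => (hγK n).trans hn
  · rintro rfl
    exact hx (hγK 0 (hγ 0).left_mem)

lemma exists_isArc_through (hK : IsCyclicChain K x) (hx : x ∉ K 0) (hp : p ∈ K 0 \ K 1)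
    (hq : q ∈ K 0 \ K 1) (hpq : p ≠ q) : ∃ α, IsArc p q α ∧ x ∈ α := by
  obtain ⟨r, s, α, β, rfl, rfl, h⟩ := hK.exists_linkage_seq hp hq hpq
  obtain ⟨δ₁, hδ₁, h₁⟩ :=
    hK.exists_isArc_right (fun n => (h n).left) (fun n => (h n).left_subset) hx
  obtain ⟨δ₂, hδ₂, h₂⟩ :=
    hK.exists_isArc_right (fun n => (h n).right) (fun n => (h n).right_subset) hx
  refine ⟨δ₁ ∪ δ₂, h₁.trans h₂.symm fun y ⟨hy₁, hy₂⟩ => ?_, Or.inl h₁.right_mem⟩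
  by_contra hyx
  exact disjoint_left.1 (IsLinkage.disjoint_iUnion hK.disjoint h)
    ((hδ₁ hy₁).resolve_left hyx) ((hδ₂ hy₂).resolve_left hyx)

end IsCyclicChain

/-! ### Maximal cyclic sets are closed -/

section Complete

variable {X : Type} [MetricSpace X] [CompleteSpace X] [LocallyConnectedSpace X]
  [TopologicalSpace.SeparableSpace X]

lemma exists_isArc_of_isOpen_of_isPreconnected {V : Set X} {a b : X} (hVo : IsOpen V)
    (hVc : IsPreconnected V) (ha : a ∈ V) (hb : b ∈ V) (hab : a ≠ b) : ∃ α ⊆ V, IsArc a b α :=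
  exists_isArc_of_joinedIn (joinedIn_of_isOpen_of_isPreconnected hVo hVc ha hb) hab

lemma MaximalCyclic.mem_of_isArc_of_mem_closure {T α : Set X} {a b y : X} (hT : MaximalCyclic T)
    (hα : IsArc a b α) (ha : a ∈ closure T) (hb : b ∈ T) (hy : y ∈ α) (hya : y ≠ a) : y ∈ T := by
  rcases eq_or_ne y b with rfl | hyb
  · exact hb
  obtain ⟨α₁, α₂, hα₁, hα₂, -, hα₁₂⟩ := hα.split hy hya hyb
  have haα₂ : a ∉ α₂ := fun h => hya (hα₁₂.subset ⟨hα₁.left_mem, h⟩).symm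
  obtain ⟨U, hUα₂, hUo, haU, hUc⟩ :=
    exists_isOpen_isConnected_subset (hα₂.isCompact.isClosed.isOpen_compl.mem_nhds haα₂)
  obtain ⟨t, htU, htT⟩ := mem_closure_iff.1 ha U hUo haU
  have hty : JoinedIn (U ∪ α₁) t y :=
    ((joinedIn_of_isOpen_of_isPreconnected hUo hUc.isPreconnected htU haU).mono
      subset_union_left).trans (hα₁.joinedIn.mono subset_union_right)
  obtain ⟨γ, hγ, hγarc⟩ :=
    exists_isArc_of_joinedIn hty fun h => hUα₂ htU (h ▸ hα₂.left_mem)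
  have hγα₂ : γ ∩ α₂ ⊆ {y} := fun z ⟨hzγ, hzα₂⟩ =>
    hα₁₂.subset ⟨(hγ hzγ).resolve_left fun h => hUα₂ h hzα₂, hzα₂⟩
  exact hT.subset_of_isArc (hγarc.trans hα₂ hγα₂) htT hb (Or.inl hγarc.right_mem)

end Complete

lemma subset_connectedComponentIn_of_mem {X : Type*} [TopologicalSpace X] {A F : Set X} {x a : X}
    (hA : IsPreconnected A) (hAF : A ⊆ F) (ha : a ∈ A) (hax : a ∈ connectedComponentIn F x) :
    A ⊆ connectedComponentIn F x := by
  rw [connectedComponentIn_eq hax]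
  exact hA.subset_connectedComponentIn ha hAF

/-- The injective curve `f` on `[0, 1]` accesses the point `f 0` outside `T` from within `T`. -/
structure IsAccessArc {X : Type*} [TopologicalSpace X] (T : Set X) (f : ℝ → X) : Prop where
  continuous : Continuous f
  injOn : InjOn f (Icc 0 1)
  notMem : f 0 ∉ T
  mem : ∀ s ∈ Ioc (0 : ℝ) 1, f s ∈ T

/-- The part of `U` that lies on the side of `f 0` when `U` is cut at the point `f s`. -/
def nearSide {X : Type*} [TopologicalSpace X] (U : Set X) (f : ℝ → X) (s : ℝ) : Set X :=
  connectedComponentIn (U \ {f s}) (f 0)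

section NearSide

variable {X : Type*} [TopologicalSpace X] {T U A : Set X} {f : ℝ → X} {a : X} {r s δ : ℝ}

lemma mem_of_isPreconnected_of_mem_nearSide (hA : IsPreconnected A) (hAU : A ⊆ U) (ha : a ∈ A)
    (has : a ∈ nearSide U f s) {b : X} (hb : b ∈ A) (hbs : b ∉ nearSide U f s) : f s ∈ A := by
  by_contra hs
  exact hbs (subset_connectedComponentIn_of_mem hA (subset_sdiff_singleton hAU hs) ha has hb)

namespace IsAccessArc

lemma zero_mem_nearSide (hf : IsAccessArc T f) (h0U : f 0 ∈ U) (hs : s ∈ Ioc (0 : ℝ) 1) :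
    f 0 ∈ nearSide U f s :=
  mem_connectedComponentIn ⟨h0U, fun h => hf.notMem (h ▸ hf.mem s hs)⟩

lemma image_subset_nearSide (hf : IsAccessArc T f) (hr : 0 ≤ r) (hrs : r < s) (hs : s ≤ 1)
    (hfU : f '' Icc 0 r ⊆ U) : f '' Icc 0 r ⊆ nearSide U f s := by
  refine (isPreconnected_Icc.image f hf.continuous.continuousOn).subset_connectedComponentIn
    (mem_image_of_mem f (left_mem_Icc.2 hr)) (subset_sdiff_singleton hfU ?_)
  rintro ⟨t, ht, hts⟩
  have := hf.injOn ⟨ht.1, ht.2.trans (hrs.le.trans hs)⟩ ⟨hr.trans hrs.le, hs⟩ hts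
  linarith [ht.2]

lemma notMem_nearSide (hf : IsAccessArc T f) (hδ : δ ≤ 1) (hfU : f '' Icc 0 δ ⊆ U) (hs : 0 < s)
    (hsep : f δ ∉ nearSide U f s) (hsr : s < r) (hr : r ≤ δ) : f r ∉ nearSide U f s := by
  intro hrs
  obtain ⟨t, ht, hts⟩ := mem_of_isPreconnected_of_mem_nearSide
    (isPreconnected_Icc.image f hf.continuous.continuousOn)
    ((image_mono (Icc_subset_Icc_left (hs.trans hsr).le)).trans hfU)
    (mem_image_of_mem f (left_mem_Icc.2 hr)) hrs (mem_image_of_mem f (right_mem_Icc.2 hr)) hsep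
  have := hf.injOn ⟨(hs.trans hsr).le.trans ht.1, ht.2.trans hδ⟩
    ⟨hs.le, (hsr.le.trans hr).trans hδ⟩ hts
  linarith [ht.1]

end IsAccessArc

end NearSide

lemma eventually_image_Icc_subset {X : Type*} [TopologicalSpace X] {f : ℝ → X} {a : ℝ} {V : Set X}
    (hf : ContinuousAt f a) (hV : V ∈ nhds (f a)) :
    ∀ᶠ r in nhdsWithin a (Ioi a), f '' Icc a r ⊆ V := by
  obtain ⟨u, hu, huV⟩ := exists_Ico_subset_of_mem_nhds (hf hV) (exists_gt a)
  filter_upwards [Ioo_mem_nhdsGT hu] with r hr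
  exact image_subset_iff.2 fun t ht => huV ⟨ht.1, ht.2.trans_lt hr.2⟩

namespace IsAccessArc

open Filter

variable {X : Type} [MetricSpace X] {T U E : Set X} {f : ℝ → X} {t : X} {r s δ ρ : ℝ}

lemma isArc (hf : IsAccessArc T f) (hr : 0 ≤ r) (hrs : r < s) (hs : s ≤ 1) :
    IsArc (f r) (f s) (f '' Icc r s) :=
  IsArc.of_injOn_Icc hrs hf.continuous.continuousOn (hf.injOn.mono (Icc_subset_Icc hr hs))

lemma exists_mem_nearSide_dist_eq (hf : IsAccessArc T f) (hT : MaximalCyclic T) (hδ : δ ≤ 1)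
    (hs : s ∈ Ioo 0 δ) (hρ : 0 < ρ) (hρU : closedBall (f 0) ρ ⊆ U)
    (hρδ : ρ ≤ dist (f δ) (f 0)) : ∃ y ∈ T, y ∈ nearSide U f s ∧ dist y (f 0) = ρ := by
  obtain ⟨r, hrρ, hr⟩ := ((eventually_image_Icc_subset hf.continuous.continuousAt
    (ball_mem_nhds _ hρ)).and (Ioo_mem_nhdsGT hs.1)).exists
  have hrmem : f r ∈ f '' Icc 0 r := mem_image_of_mem f (right_mem_Icc.2 hr.1.le)
  have hrs : f r ∈ nearSide U f s := hf.image_subset_nearSide hr.1.le hr.2 (hs.2.le.trans hδ)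
    (hrρ.trans (ball_subset_closedBall.trans hρU)) hrmem
  have hT' {u : ℝ} (hu : u ∈ Ioc 0 δ) (hus : u ≠ s) : f u ∈ T \ {f s} :=
    ⟨hf.mem u ⟨hu.1, hu.2.trans hδ⟩, fun h => hus (hf.injOn ⟨hu.1.le, hu.2.trans hδ⟩
      ⟨hs.1.le, hs.2.le.trans hδ⟩ h)⟩
  obtain ⟨α, hα, hαarc⟩ := exists_isArc_of_joinedIn
    (hT.2.1.joinedIn_sdiff_singleton (hT' ⟨hr.1, (hr.2.trans hs.2).le⟩ hr.2.ne)
      (hT' ⟨hs.1.trans hs.2, le_rfl⟩ hs.2.ne'))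
    fun h => ((mem_ball.1 (hrρ hrmem)).trans_le hρδ).ne (by rw [h])
  obtain ⟨c, hcρ, β, hβα, hβ, hβρ⟩ := hαarc.exists_dist_eq (hrρ hrmem) hρδ
  refine ⟨c, (hα (hβα hβ.right_mem)).1, ?_, hcρ⟩
  by_contra hc
  exact (hα (hβα (mem_of_isPreconnected_of_mem_nearSide hβ.isPreconnected (hβρ.trans hρU)
    hβ.left_mem hrs hβ.right_mem hc))).2 rfl

lemma exists_frequently_subset_nearSide [ProperSpace X] [LocallyConnectedSpace X]
    (hf : IsAccessArc T f) (hT : MaximalCyclic T) (hU : IsOpen U) (hδ : δ ∈ Ioc (0 : ℝ) 1)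
    (h0U : f 0 ∈ U)
    (hsep : ∃ᶠ s in nhdsWithin 0 (Ioi 0), f δ ∉ nearSide U f s) :
    ∃ W, (W ∩ T).Nonempty ∧
      ∃ᶠ s in nhdsWithin 0 (Ioi 0), f δ ∉ nearSide U f s ∧ W ⊆ nearSide U f s := by
  have h0δ : f 0 ≠ f δ := fun h => hf.notMem (h ▸ hf.mem δ hδ)
  obtain ⟨ρ, hρ, hρU⟩ := nhds_basis_closedBall.mem_iff.1
    (inter_mem (hU.mem_nhds h0U) (isOpen_compl_singleton.mem_nhds h0δ))
  have hρδ : ρ ≤ dist (f δ) (f 0) := not_lt.1 fun h => (hρU h.le).2 rfl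
  have : Nonempty X := ⟨f 0⟩
  choose! y hyT hyN hyρ using fun s (hs : s ∈ Ioo 0 δ) =>
    hf.exists_mem_nearSide_dist_eq hT hδ.2 hs hρ (fun z hz => (hρU hz).1) hρδ
  let F := nhdsWithin (0 : ℝ) (Ioi 0) ⊓ 𝓟 {s | f δ ∉ nearSide U f s}
  have : F.NeBot := frequently_mem_iff_neBot.1 hsep
  have hFδ : ∀ᶠ s in F, s ∈ Ioo 0 δ := mem_inf_of_left (Ioo_mem_nhdsGT hδ.1)
  have hFsep : ∀ᶠ s in F, f δ ∉ nearSide U f s := mem_inf_of_right (mem_principal_self _)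
  obtain ⟨z, hz, hzF⟩ := (isCompact_sphere (f 0) ρ).exists_mapClusterPt
    (tendsto_principal.2 (hFδ.mono hyρ))
  have h0z : z ≠ f 0 := dist_pos.1 (by rwa [mem_sphere.1 hz])
  obtain ⟨V, V', hV, hV', hVV'⟩ := t2_separation_nhds h0z
  obtain ⟨W, hWUV, hWo, hzW, hWc⟩ := exists_isOpen_isConnected_subset
    (inter_mem (hU.mem_nhds (hρU (sphere_subset_closedBall hz)).1) hV)
  have hFV' : ∀ᶠ s in F, f s ∈ V' :=
    (hf.continuous.tendsto 0).eventually hV' |>.filter_mono (inf_le_left.trans nhdsWithin_le_nhds)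
  have hFW : ∃ᶠ s in F, y s ∈ W := hzF.frequently (hWo.mem_nhds hzW)
  refine ⟨W, ?_, ((hFW.and_eventually (hFδ.and (hFsep.and hFV'))).mono ?_).filter_mono inf_le_left⟩
  · obtain ⟨s, hsW, hs⟩ := (hFW.and_eventually hFδ).exists
    exact ⟨y s, hsW, hyT s hs⟩
  · exact fun s ⟨hsW, hs, hsep, hsV'⟩ => ⟨hsep, subset_connectedComponentIn_of_mem
      hWc.isPreconnected (subset_sdiff_singleton (fun w hw => (hWUV hw).1)
        fun h => disjoint_left.1 hVV' (hWUV h).2 hsV') hsW (hyN s hs)⟩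

lemma inter_image_Icc_subset_of_frequently (hf : IsAccessArc T f) (hs : s ∈ Icc (0 : ℝ) 1)
    (hE : IsArc t (f 0) E) (hEU : E ⊆ U)
    (hsep : ∃ᶠ r in nhdsWithin 0 (Ioi 0), t ∈ nearSide U f r ∧ f 0 ∈ nearSide U f r ∧
      ∀ u ∈ Ioc r s, f u ∉ nearSide U f r) :
    E ∩ f '' Icc 0 s ⊆ {f 0} := by
  rintro _ ⟨huE, u, hu, rfl⟩
  by_contra hu0
  have hu' : 0 < u := hu.1.lt_of_ne (by rintro rfl; exact hu0 rfl)
  obtain ⟨r, ⟨htr, h0r, hrs⟩, hr⟩ := (hsep.and_eventually (Ioo_mem_nhdsGT hu')).exists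
  have hur := hrs u ⟨hr.2, hu.2⟩
  obtain ⟨E₁, E₂, hE₁, hE₂, rfl, hE₁₂⟩ := hE.split huE (fun h => hur (h ▸ htr)) hu0
  have hr₁ : f r ∈ E₁ := mem_of_isPreconnected_of_mem_nearSide hE₁.isPreconnected
    (subset_union_left.trans hEU) hE₁.left_mem htr hE₁.right_mem hur
  have hr₂ : f r ∈ E₂ := mem_of_isPreconnected_of_mem_nearSide hE₂.isPreconnected
    (subset_union_right.trans hEU) hE₂.right_mem h0r hE₂.left_mem hur
  exact hr.2.ne (hf.injOn ⟨hr.1.le, hr.2.le.trans (hu.2.trans hs.2)⟩ ⟨hu.1, hu.2.trans hs.2⟩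
    (hE₁₂.subset ⟨hr₁, hr₂⟩))

/- Otherwise the near sides of arbitrarily small separating parameters share a point `t` of `T`.
An arc from `t` to `f 0` in one of them meets the curve only in `f 0`, so that continuing it along
`f` gives an arc through `f 0` with both ends in `T`. -/
lemma eventually_mem_nearSide [ProperSpace X] [LocallyConnectedSpace X]
    (hf : IsAccessArc T f) (hT : MaximalCyclic T) (hU : IsOpen U) (hδ : δ ∈ Ioc (0 : ℝ) 1)
    (hfU : f '' Icc 0 δ ⊆ U) : ∀ᶠ s in nhdsWithin 0 (Ioi 0), f δ ∈ nearSide U f s := by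
  have h0U : f 0 ∈ U := hfU (mem_image_of_mem f (left_mem_Icc.2 hδ.1.le))
  by_contra hsep
  rw [not_eventually] at hsep
  obtain ⟨W, ⟨t, htW, htT⟩, hW⟩ :=
    hf.exists_frequently_subset_nearSide hT hU hδ h0U hsep
  have h0 {s : ℝ} (hs : s ∈ Ioo 0 δ) : f 0 ∈ nearSide U f s :=
    hf.zero_mem_nearSide h0U ⟨hs.1, hs.2.le.trans hδ.2⟩
  replace hW := hW.and_eventually (Ioo_mem_nhdsGT hδ.1)
  obtain ⟨s, ⟨-, hWs⟩, hs⟩ := hW.exists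
  have hs1 : s ≤ 1 := hs.2.le.trans hδ.2
  obtain ⟨E, hEs, hE⟩ := exists_isArc_of_isOpen_of_isPreconnected
    (hU.sdiff isClosed_singleton).connectedComponentIn isPreconnected_connectedComponentIn
    (hWs htW) (h0 hs) fun h => hf.notMem (h ▸ htT)
  have hEf : E ∩ f '' Icc 0 s ⊆ {f 0} := hf.inter_image_Icc_subset_of_frequently ⟨hs.1.le, hs1⟩ hE
    (hEs.trans ((connectedComponentIn_subset _ _).trans sdiff_subset)) (hW.mono ?_)
  · exact hf.notMem (hT.subset_of_isArc (hE.trans (hf.isArc le_rfl hs.1 hs1) hEf) htT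
      (hf.mem s ⟨hs.1, hs1⟩) (Or.inl hE.right_mem))
  · exact fun r ⟨⟨hsep, hWr⟩, hr⟩ => ⟨hWr htW, h0 hr, fun u hu =>
      hf.notMem_nearSide hδ.2 hfU hr.1 hsep hu.1 (hu.2.trans hs.2.le)⟩

end IsAccessArc

lemma exists_cyclicallyConnected_of_forall_mem_interior {X : Type} [MetricSpace X] {S : Set X}
    {f : ℝ → X} {c d a b : ℝ} (hf : InjOn f (Ioo c d))
    (h : ∀ s ∈ Ioo c d, ∃ K ⊆ S, IsCompact K ∧ CyclicallyConnected K ∧ s ∈ interior (f ⁻¹' K))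
    (ha : a ∈ Ioo c d) (hb : b ∈ Ioo c d) :
    ∃ K ⊆ S, IsCompact K ∧ CyclicallyConnected K ∧ f '' uIcc a b ⊆ K := by
  let P : ℝ → ℝ → Prop := fun s t =>
    ∃ K ⊆ S, IsCompact K ∧ CyclicallyConnected K ∧ uIcc s t ⊆ interior (f ⁻¹' K)
  suffices P a b by
    obtain ⟨K, hKS, hKc, hK, hfK⟩ := this
    exact ⟨K, hKS, hKc, hK, image_subset_iff.2 (hfK.trans interior_subset)⟩
  refine isPreconnected_Ioo.induction₂ P (fun s hs => ?_) ?_ ?_ ha hb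
  · obtain ⟨K, hKS, hKc, hK, hsK⟩ := h s hs
    have hnear : ∀ᶠ t in nhds s, uIcc s t ⊆ interior (f ⁻¹' K) :=
      (tendsto_const_nhds.uIcc Filter.tendsto_id).eventually
        (Filter.eventually_smallSets_subset.2 (isOpen_interior.mem_nhds hsK))
    exact (hnear.filter_mono nhdsWithin_le_nhds).mono fun t ht => ⟨K, hKS, hKc, hK, ht⟩
  · rintro r s t - hs - ⟨K, hKS, hKc, hK, hrs⟩ ⟨L, hLS, hLc, hL, hst⟩
    have hsKL : interior (f ⁻¹' K) ∩ interior (f ⁻¹' L) ∩ Ioo c d ∈ nhds s :=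
      Filter.inter_mem (Filter.inter_mem (isOpen_interior.mem_nhds (hrs right_mem_uIcc))
        (isOpen_interior.mem_nhds (hst left_mem_uIcc))) (Ioo_mem_nhds hs.1 hs.2)
    have hKL : (K ∩ L).Nontrivial := by
      refine ((infinite_of_mem_nhds s hsKL).nontrivial.image_of_injOn
        (hf.mono inter_subset_right)).mono ?_
      exact image_subset_iff.2 fun x hx =>
        ⟨interior_subset (s := f ⁻¹' K) hx.1.1, interior_subset (s := f ⁻¹' L) hx.1.2⟩
    refine ⟨K ∪ L, union_subset hKS hLS, hKc.union hLc, hK.union hL hKL, ?_⟩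
    exact uIcc_subset_uIcc_union_uIcc.trans (union_subset
      (hrs.trans (interior_mono (preimage_mono subset_union_left)))
      (hst.trans (interior_mono (preimage_mono subset_union_right))))
  · rintro s t - - ⟨K, hK⟩
    exact ⟨K, uIcc_comm s t ▸ hK⟩

namespace IsAccessArc

open Filter

variable {X : Type} [MetricSpace X] [ProperSpace X] [LocallyConnectedSpace X] {T U : Set X}
  {f : ℝ → X} {s δ : ℝ}

lemma exists_bridge_of_mem_nearSide (hf : IsAccessArc T f) (hU : IsOpen U) (h0U : f 0 ∈ U)
    (hδ : δ ≤ 1) (hs : s ∈ Ioo 0 δ) (hδs : f δ ∈ nearSide U f s) :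
    ∃ u ∈ Ico 0 s, ∃ v ∈ Ioc s δ, ∃ β ⊆ U, IsArc (f u) (f v) β ∧
      β ∩ f '' Icc 0 s = {f u} ∧ β ∩ f '' Icc s δ = {f v} := by
  have hδ0 : 0 < δ := hs.1.trans hs.2
  obtain ⟨α, hα, hαarc⟩ := exists_isArc_of_isOpen_of_isPreconnected
    (hU.sdiff isClosed_singleton).connectedComponentIn isPreconnected_connectedComponentIn
    (hf.zero_mem_nearSide h0U ⟨hs.1, hs.2.le.trans hδ⟩) hδs
    fun h => hf.notMem (h ▸ hf.mem δ ⟨hδ0, hδ⟩)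
  replace hα : α ⊆ U \ {f s} := hα.trans (connectedComponentIn_subset _ _)
  have hcl (a b : ℝ) : IsClosed (f '' Icc a b) := (isCompact_Icc.image hf.continuous).isClosed
  have hαs : α ∩ f '' Icc 0 s ∩ f '' Icc s δ = ∅ := by
    rw [eq_empty_iff_forall_notMem]
    rintro _ ⟨⟨hrα, r, hr, rfl⟩, t, ht, htr⟩
    obtain rfl := hf.injOn ⟨hs.1.le.trans ht.1, ht.2.trans hδ⟩
      ⟨hr.1, hr.2.trans (hs.2.le.trans hδ)⟩ htr
    exact (hα hrα).2 (congrArg f (le_antisymm hr.2 ht.1))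
  obtain ⟨_, ⟨u, hu, rfl⟩, _, ⟨v, hv, rfl⟩, β, hβα, hβ, hβu, hβv⟩ :=
    hαarc.exists_subarc_of_isClosed (hcl 0 s) (hcl s δ)
      (mem_image_of_mem f (left_mem_Icc.2 hs.1.le)) (mem_image_of_mem f (right_mem_Icc.2 hs.2.le))
      hαs
  refine ⟨u, ⟨hu.1, hu.2.lt_of_ne ?_⟩, v, ⟨hv.1.lt_of_ne ?_, hv.2⟩, β,
    fun y hy => (hα (hβα hy)).1, hβ, hβu, hβv⟩
  · exact fun h => (hα (hβα hβ.left_mem)).2 (congrArg f h)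
  · exact fun h => (hα (hβα hβ.right_mem)).2 (congrArg f h.symm)

lemma exists_isJordanCurve_of_mem_nearSide (hf : IsAccessArc T f) (hT : MaximalCyclic T)
    (hU : IsOpen U) (hδ : δ ≤ 1) (hfU : f '' Icc 0 δ ⊆ U) (hs : s ∈ Ioo 0 δ)
    (hδs : f δ ∈ nearSide U f s) :
    ∃ J ⊆ U ∩ T, IsJordanCurve J ∧ s ∈ interior (f ⁻¹' J) := by
  have h0U : f 0 ∈ U := hfU (mem_image_of_mem f (left_mem_Icc.2 (hs.1.trans hs.2).le))
  obtain ⟨u, hu, v, hv, β, hβU, hβ, hβu, hβv⟩ :=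
    hf.exists_bridge_of_mem_nearSide hU h0U hδ hs hδs
  have hJ : IsJordanCurve (β ∪ f '' Icc u v) := by
    refine hβ.isJordanCurve_union (hf.isArc hu.1 (hu.2.trans hv.1) (hv.2.trans hδ)) ?_
    rintro _ ⟨hrβ, r, hr, rfl⟩
    rcases le_total r s with h | h
    · exact Or.inl (hβu.subset ⟨hrβ, r, ⟨hu.1.trans hr.1, h⟩, rfl⟩)
    · exact Or.inr (hβv.subset ⟨hrβ, r, ⟨h, hr.2.trans hv.2⟩, rfl⟩)
  have hJT : β ∪ f '' Icc u v ⊆ T := by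
    refine hT.subset_of_isJordanCurve hJ
      ⟨f s, ⟨hf.mem s ⟨hs.1, hs.2.le.trans hδ⟩, Or.inr ⟨s, ⟨hu.2.le, hv.1.le⟩, rfl⟩⟩, f v,
        ⟨hf.mem v ⟨hs.1.trans hv.1, hv.2.trans hδ⟩, Or.inl hβ.right_mem⟩, fun h => hv.1.ne ?_⟩
    exact hf.injOn ⟨hs.1.le, hs.2.le.trans hδ⟩ ⟨(hs.1.trans hv.1).le, hv.2.trans hδ⟩ h
  refine ⟨_, subset_inter (union_subset hβU ?_) hJT, hJ, ?_⟩
  · exact (image_mono (Icc_subset_Icc hu.1 hv.2)).trans hfU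
  · exact mem_interior_iff_mem_nhds.2 (mem_of_superset (Icc_mem_nhds hu.2 hv.1)
      fun r hr => Or.inr (mem_image_of_mem f hr))

lemma eventually_exists_cyclicallyConnected (hf : IsAccessArc T f) (hT : MaximalCyclic T)
    (hU : IsOpen U) (h0U : f 0 ∈ U) :
    ∀ᶠ b in nhdsWithin 0 (Ioi 0), ∀ a ∈ Ioo 0 b,
      ∃ K ⊆ U ∩ T, IsCompact K ∧ CyclicallyConnected K ∧ f '' Icc a b ⊆ K := by
  obtain ⟨δ, hfU, hδ⟩ := ((eventually_image_Icc_subset hf.continuous.continuousAt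
    (hU.mem_nhds h0U)).and (Ioo_mem_nhdsGT zero_lt_one)).exists
  obtain ⟨η, hη, hηδ⟩ := mem_nhdsGT_iff_exists_Ioo_subset.1
    ((hf.eventually_mem_nearSide hT hU ⟨hδ.1, hδ.2.le⟩ hfU).and (Ioo_mem_nhdsGT hδ.1))
  have hη1 : Ioo 0 η ⊆ Icc (0 : ℝ) 1 := fun s hs => ⟨hs.1.le, (hηδ hs).2.2.le.trans hδ.2.le⟩
  filter_upwards [Ioo_mem_nhdsGT hη] with b hb a ha
  rw [← uIcc_of_le ha.2.le]
  refine exists_cyclicallyConnected_of_forall_mem_interior (hf.injOn.mono hη1) (fun s hs => ?_)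
    ⟨ha.1, ha.2.trans hb.2⟩ hb
  obtain ⟨J, hJU, hJ, hsJ⟩ :=
    hf.exists_isJordanCurve_of_mem_nearSide hT hU hδ.2.le hfU (hηδ hs).2 (hηδ hs).1
  exact ⟨J, hJU, hJ.isCompact, hJ.cyclicallyConnected, hsJ⟩

end IsAccessArc

lemma exists_isCyclicChain_of_forall_lt {X : Type} [TopologicalSpace X] [T2Space X]
    {L : ℕ → ℕ → Set X} {x : X}
    (hLc : ∀ n m, n < m → IsCompact (L n m)) (hL : ∀ n m, n < m → CyclicallyConnected (L n m))
    (hx : ∀ n m, n < m → x ∉ L n m)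
    (hLL : ∀ n m p, n < m → m < p → (L n m ∩ L m p).Nontrivial)
    (hLx : ∀ U ∈ nhds x, ∀ᶠ n in Filter.atTop, ∀ m, n < m → L n m ⊆ U) :
    ∃ φ : ℕ → ℕ, StrictMono φ ∧ IsCyclicChain (fun k => L (φ k) (φ (k + 1))) x := by
  have hdisj (m : ℕ) : ∃ N, ∀ n < m, ∀ p ≥ N, ∀ q > p, Disjoint (L n m) (L p q) := by
    have hU : (⋃ n ∈ Iio m, L n m)ᶜ ∈ nhds x := by
      refine IsOpen.mem_nhds ?_ (by simpa using fun n => hx n m)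
      exact ((finite_Iio m).isClosed_biUnion fun n hn => (hLc n m hn).isClosed).isOpen_compl
    obtain ⟨N, hN⟩ := Filter.eventually_atTop.1 (hLx _ hU)
    exact ⟨N, fun n hn p hp q hq => (disjoint_compl_right.mono_right (hN p hp q hq)).mono_left
      (subset_biUnion_of_mem (u := fun n => L n m) hn)⟩
  choose N hN using hdisj
  let φ : ℕ → ℕ := fun k => Nat.rec 0 (fun _ m => max (N m) (m + 1)) k
  have hφ : StrictMono φ := strictMono_nat_of_lt_succ fun k => le_max_right (N (φ k)) (φ k + 1)
  refine ⟨φ, hφ, ⟨fun k => hLc _ _ (hφ k.lt_succ_self), fun k => hL _ _ (hφ k.lt_succ_self),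
    fun k => hLL _ _ _ (hφ k.lt_succ_self) (hφ (k + 1).lt_succ_self), fun k l hkl => ?_,
    fun U hU => ?_⟩⟩
  · exact hN (φ (k + 1)) (φ k) (hφ k.lt_succ_self) (φ l)
      ((le_max_left (N (φ (k + 1))) _).trans (hφ.monotone hkl)) _ (hφ l.lt_succ_self)
  · exact (hφ.tendsto_atTop.eventually (hLx U hU)).mono fun k hk => hk _ (hφ k.lt_succ_self)

lemma IsCyclicChain.tail {X : Type} [TopologicalSpace X] {K : ℕ → Set X} {x : X}
    (hK : IsCyclicChain K x) : IsCyclicChain (fun n => K (n + 1)) x where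
  isCompact n := hK.isCompact (n + 1)
  cyclicallyConnected n := hK.cyclicallyConnected (n + 1)
  nontrivial_inter n := hK.nontrivial_inter (n + 1)
  disjoint n m h := hK.disjoint (n + 1) (m + 1) (by lia)
  eventually_subset U hU := (Filter.tendsto_add_atTop_nat 1).eventually (hK.eventually_subset U hU)

section Closed

open Filter

variable {X : Type} [MetricSpace X] [ProperSpace X] [LocallyConnectedSpace X] {T : Set X}
  {f : ℝ → X}

namespace IsAccessArc

lemma exists_isCyclicChain (hf : IsAccessArc T f) (hT : MaximalCyclic T) :
    ∃ K : ℕ → Set X, (∀ n, K n ⊆ T) ∧ IsCyclicChain K (f 0) := by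
  obtain ⟨U, hU, hUx⟩ := (nhds_basis_opens (f 0)).exists_antitone_subbasis
  obtain ⟨c, hc, hc0, hc_lim⟩ := exists_seq_strictAnti_tendsto' (zero_lt_one' ℝ)
  have hc_lim' : Tendsto c atTop (nhdsWithin 0 (Ioi 0)) :=
    tendsto_nhdsWithin_iff.2 ⟨hc_lim, Eventually.of_forall fun n => (hc0 n).1⟩
  obtain ⟨φ, hφ, hφL⟩ := extraction_forall_of_eventually fun n => hc_lim'.eventually
    (hf.eventually_exists_cyclicallyConnected hT (hU n).2 (hU n).1)
  let b : ℕ → ℝ := c ∘ φ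
  have hb : StrictAnti b := hc.comp_strictMono hφ
  have hb0 (n : ℕ) : b n ∈ Ioo 0 1 := hc0 (φ n)
  choose! L hLT hLc hL hfL using hφL
  have hmem (n m : ℕ) (h : n < m) : b (m + 1) ∈ Ioo 0 (b n) := ⟨(hb0 _).1, hb (by lia)⟩
  let L' : ℕ → ℕ → Set X := fun n m => L n (b (m + 1))
  have hLL (n m p : ℕ) (hnm : n < m) (hmp : m < p) : (L' n m ∩ L' m p).Nontrivial := by
    have hI : (f '' Icc (b (m + 1)) (b m)).Nontrivial :=
      (Icc_infinite (hb m.lt_succ_self)).nontrivial.image_of_injOn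
        (hf.injOn.mono (Icc_subset_Icc (hb0 _).1.le (hb0 _).2.le))
    exact hI.mono (subset_inter
      ((image_mono (Icc_subset_Icc_right (hb hnm).le)).trans (hfL n _ (hmem n m hnm)))
      ((image_mono (Icc_subset_Icc_left (hb (Nat.succ_lt_succ hmp)).le)).trans
        (hfL m _ (hmem m p hmp))))
  have hLx (V : Set X) (hV : V ∈ nhds (f 0)) : ∀ᶠ n in atTop, ∀ m, n < m → L' n m ⊆ V := by
    obtain ⟨N, hN⟩ := hUx.mem_iff.1 hV
    filter_upwards [eventually_ge_atTop N] with n hn m hnm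
    exact (hLT n _ (hmem n m hnm)).trans (inter_subset_left.trans ((hUx.antitone hn).trans hN))
  obtain ⟨ψ, hψ, hK⟩ := exists_isCyclicChain_of_forall_lt (L := L')
    (fun n m h => hLc n _ (hmem n m h)) (fun n m h => hL n _ (hmem n m h))
    (fun n m h h0 => hf.notMem (hLT n _ (hmem n m h) h0).2) hLL hLx
  exact ⟨_, fun k => (hLT _ _ (hmem _ _ (hψ k.lt_succ_self))).trans inter_subset_right, hK⟩

end IsAccessArc

namespace MaximalCyclic

lemma exists_isAccessArc (hT : MaximalCyclic T) {x : X} (hx : x ∈ closure T) (hxT : x ∉ T) :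
    ∃ f : ℝ → X, IsAccessArc T f ∧ f 0 = x := by
  obtain ⟨U, -, hUo, hxU, hUc⟩ := exists_isOpen_isConnected_subset (x := x) univ_mem
  obtain ⟨t, htU, htT⟩ := mem_closure_iff.1 hx U hUo hxU
  obtain ⟨α, -, hα⟩ := exists_isArc_of_isOpen_of_isPreconnected hUo hUc.isPreconnected hxU htU
    fun h => hxT (h ▸ htT)
  obtain ⟨f, hfc, hfi, rfl, rfl, rfl⟩ := hα.exists_param
  refine ⟨f, ⟨hfc, hfi, hxT, fun s hs => ?_⟩, rfl⟩
  refine hT.mem_of_isArc_of_mem_closure hα hx htT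
    (mem_image_of_mem f (Ioc_subset_Icc_self hs)) fun h => hs.1.ne' ?_
  exact hfi (Ioc_subset_Icc_self hs) (left_mem_Icc.2 zero_le_one) h

lemma isClosed (hT : MaximalCyclic T) : IsClosed T := by
  refine isClosed_of_closure_subset fun x hx => ?_
  by_contra hxT
  obtain ⟨f, hf, rfl⟩ := hT.exists_isAccessArc hx hxT
  obtain ⟨K, hKT, hK⟩ := hf.exists_isCyclicChain hT
  obtain ⟨p, hp, q, hq, hpq⟩ := hK.nontrivial_inter 0
  have hK₂ := disjoint_left.1 (hK.disjoint 0 2 le_rfl)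
  obtain ⟨α, hα, h0α⟩ := hK.tail.exists_isArc_through (fun h => hxT (hKT 1 h))
    ⟨hp.2, hK₂ hp.1⟩ ⟨hq.2, hK₂ hq.1⟩ hpq
  exact hxT (hT.subset_of_isArc hα (hKT 0 hp.1) (hKT 0 hq.1) h0α)

end MaximalCyclic

end Closed

/-! ### Boundaries of complementary components -/

lemma disjoint_frontier_connectedComponentIn {X : Type*} [TopologicalSpace X]
    [LocallyConnectedSpace X] {F : Set X} {x : X} (hF : IsOpen F) :
    Disjoint (frontier (connectedComponentIn F x)) F := by
  refine disjoint_left.2 fun p hp hpF => ?_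
  rw [hF.connectedComponentIn.frontier_eq] at hp
  obtain ⟨y, hyp, hyx⟩ := mem_closure_iff.1 hp.1 (connectedComponentIn F p)
    hF.connectedComponentIn (mem_connectedComponentIn hpF)
  exact hp.2 (subset_connectedComponentIn_of_mem isPreconnected_connectedComponentIn
    (connectedComponentIn_subset F p) hyp hyx (mem_connectedComponentIn hpF))

namespace MaximalCyclic

variable {X : Type} [MetricSpace X] [LocallyConnectedSpace X] {T C : Set X}

lemma subsingleton_closure_inter [CompleteSpace X] [TopologicalSpace.SeparableSpace X]
    (hT : MaximalCyclic T) (hCo : IsOpen C) (hCc : IsPreconnected C) (hCT : Disjoint C T) :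
    (closure C ∩ T).Subsingleton := by
  rintro p ⟨hpC, hpT⟩ q ⟨hqC, hqT⟩
  by_contra hpq
  obtain ⟨U, V, hU, hV, hpU, hqV, hUV⟩ := t2_separation hpq
  obtain ⟨U', hU'U, hU'o, hpU', hU'c⟩ := exists_isOpen_isConnected_subset (hU.mem_nhds hpU)
  obtain ⟨V', hV'V, hV'o, hqV', hV'c⟩ := exists_isOpen_isConnected_subset (hV.mem_nhds hqV)
  obtain ⟨a, haU', haC⟩ := mem_closure_iff.1 hpC U' hU'o hpU'
  obtain ⟨b, hbV', hbC⟩ := mem_closure_iff.1 hqC V' hV'o hqV'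
  have hconn : IsPreconnected (U' ∪ C ∪ V') :=
    (hU'c.isPreconnected.union a haU' haC hCc).union b (Or.inr hbC) hbV' hV'c.isPreconnected
  obtain ⟨α, hα, hαarc⟩ := exists_isArc_of_isOpen_of_isPreconnected
    ((hU'o.union hCo).union hV'o) hconn (Or.inl (Or.inl hpU')) (Or.inr hqV') hpq
  have hαT : α ⊆ T := hT.subset_of_isArc hαarc hpT hqT
  have hαUV : α ⊆ U' ∪ V' := fun y hy => (hα hy).imp_left fun h =>
    h.resolve_right fun hyC => disjoint_left.1 hCT hyC (hαT hy)
  obtain ⟨y, -, hyU', hyV'⟩ := hαarc.isPreconnected U' V' hU'o hV'o hαUV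
    ⟨p, hαarc.left_mem, hpU'⟩ ⟨q, hαarc.right_mem, hqV'⟩
  exact disjoint_left.1 hUV (hU'U hyU') (hV'V hyV')

end MaximalCyclic

theorem frontier_connectedComponentIn_compl_maximalCyclic_general
    (X : Type) [MetricSpace X] [ProperSpace X] [PreconnectedSpace X] [LocallyConnectedSpace X]
    (T : Set X) (hT : MaximalCyclic T) (C : Set X)
    (hC : ∃ x ∈ Tᶜ, C = connectedComponentIn Tᶜ x) :
    ∃ p ∈ T, frontier C = {p} := by
  obtain ⟨x, hx, rfl⟩ := hC
  set C := connectedComponentIn Tᶜ x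
  have hTo : IsOpen Tᶜ := hT.isClosed.isOpen_compl
  have hCT : Disjoint C T := disjoint_compl_left.mono_left (connectedComponentIn_subset Tᶜ x)
  have hfT : frontier C ⊆ T :=
    disjoint_compl_right_iff_subset.1 (disjoint_frontier_connectedComponentIn hTo)
  have hC : C ≠ univ := fun h => by
    rw [h, univ_disjoint] at hCT
    exact hT.1 (hCT ▸ subsingleton_empty)
  obtain ⟨p, hp⟩ := nonempty_frontier_iff.2 ⟨⟨x, mem_connectedComponentIn hx⟩, hC⟩
  have hsub : (frontier C).Subsingleton :=
    (hT.subsingleton_closure_inter hTo.connectedComponentIn isPreconnected_connectedComponentIn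
      hCT).anti (subset_inter frontier_subset_closure hfT)
  exact ⟨p, hfT hp, hsub.eq_singleton_of_mem hp⟩

/-- If `T` is a maximal cyclic subset of a Peano space `X` and `C` a connected
component of `X \ T`, then the boundary of `C` is a single point lying in `T`. -/
theorem frontier_connectedComponentIn_compl_maximalCyclic
    (X : Type) [MetricSpace X] [CompactSpace X] [ConnectedSpace X] [LocallyConnectedSpace X]
    (T : Set X) (hT : MaximalCyclic T) (C : Set X)
    (hC : ∃ x ∈ Tᶜ, C = connectedComponentIn Tᶜ x) :
    ∃ p ∈ T, frontier C = {p} :=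
  frontier_connectedComponentIn_compl_maximalCyclic_general X T hT C hC
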